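/- Every eigenvalue a of 𝒜_{m,n} on V^{m,n} has the form a = rN + c(ρ/μ) + c(σ/ν) where r ∈ {0,…,min(m,n)}, (ρ,σ) is a pair of partitions of m and n each with at most N rows, (μ,ν) are partitions with m−|μ| = n−|ν| = r, μ ⊆ ρ, ν ⊆ σ, ℓ(μ)+ℓ(ν) ≤ N, and the rational GL(N)-representation labelled (μ,ν) occurs in U^{(ρ,∅)} ⊗ U^{(∅,σ)}; moreover a = 0 if and only if r = 0. -/

import Mathlib

open scoped BigOperators

noncomputable section

/-- Mixed tensors of valence (m,n) on an N-dimensional space, given by components. -/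
abbrev Tens (N m n : ℕ) := (Fin m → Fin N) → (Fin n → Fin N) → ℂ

namespace Mixed

variable (N : ℕ)

/-- Permutation of the contravariant (V) factors. -/
def permU (m n : ℕ) (p : Equiv.Perm (Fin m)) : Module.End ℂ (Tens N m n) where
  toFun t := fun i j => t (i ∘ p) j
  map_add' t s := rfl
  map_smul' c t := rfl

/-- Permutation of the covariant (V*) factors. -/
def permD (m n : ℕ) (q : Equiv.Perm (Fin n)) : Module.End ℂ (Tens N m n) where
  toFun t := fun i j => t i (j ∘ q)
  map_add' t s := rfl
  map_smul' c t := rfl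

/-- The contraction map `tr_{ab'}` (the result, a tensor of valence (m−1,n−1), is
recorded as a function not depending on the slots a, b). -/
def ctr (m n : ℕ) (a : Fin m) (b : Fin n) : Tens N m n →ₗ[ℂ] Tens N m n where
  toFun t := fun i j => ∑ k : Fin N,
    t (Function.update i a k) (Function.update j b k)
  map_add' t s := by funext i j; simp [Finset.sum_add_distrib]
  map_smul' c t := by funext i j; simp [Finset.mul_sum]

/-- The contraction-insertion endomorphism `τ_{ab'} = tr⁺_{ab'} ∘ tr_{ab'}`. -/
def tauC (m n : ℕ) (a : Fin m) (b : Fin n) : Module.End ℂ (Tens N m n) where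
  toFun t := fun i j =>
    if i a = j b then
      ∑ k : Fin N, t (Function.update i a k) (Function.update j b k)
    else 0
  map_add' t s := by
    funext i j; by_cases h : i a = j b <;> simp [h, Finset.sum_add_distrib]
  map_smul' c t := by
    funext i j; by_cases h : i a = j b <;> simp [h, Finset.mul_sum]

/-- `𝒜_{m,n} = ∑_{a,b'} τ_{ab'}`. -/
def A (m n : ℕ) : Module.End ℂ (Tens N m n) :=
  ∑ a : Fin m, ∑ b : Fin n, tauC N m n a b

/-- The traceless subspace: common kernel of all contractions. -/
def traceless0 (m n : ℕ) : Submodule ℂ (Tens N m n) :=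
  ⨅ a : Fin m, ⨅ b : Fin n, LinearMap.ker (ctr N m n a b)

/-- `ℒ_m`: the sum of the transpositions of the V-factors. -/
def LOp (m n : ℕ) : Module.End ℂ (Tens N m n) :=
  ∑ x ∈ Finset.univ.filter (fun x : Fin m × Fin m => x.1 < x.2),
    permU N m n (Equiv.swap x.1 x.2)

/-- `ℛ_n`: the sum of the transpositions of the V*-factors. -/
def ROp (m n : ℕ) : Module.End ℂ (Tens N m n) :=
  ∑ x ∈ Finset.univ.filter (fun x : Fin n × Fin n => x.1 < x.2),
    permD N m n (Equiv.swap x.1 x.2)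

/-- The (diagonal) action of GL(N) on mixed tensors: the contragredient action on
the covariant indices. -/
def glAct (m n : ℕ) (g : GL (Fin N) ℂ) : Module.End ℂ (Tens N m n) where
  toFun t := fun i j => ∑ i' : Fin m → Fin N, ∑ j' : Fin n → Fin N,
    ((∏ a : Fin m, (g : Matrix (Fin N) (Fin N) ℂ) (i a) (i' a)) *
      ∏ b : Fin n, ((g⁻¹ : GL (Fin N) ℂ) : Matrix (Fin N) (Fin N) ℂ) (j' b) (j b)) *
        t i' j'
  map_add' t s := by
    funext i j
    simp only [Pi.add_apply, mul_add, Finset.sum_add_distrib]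
  map_smul' c t := by
    funext i j
    simp only [Pi.smul_apply, smul_eq_mul, RingHom.id_apply, Finset.mul_sum]
    refine Finset.sum_congr rfl fun i' _ => Finset.sum_congr rfl fun j' _ => by ring

/-- The centraliser algebra `C_{m,n}(N) = End_{GL(N)}(V^{m,n})`. -/
def Cent (m n : ℕ) : Subalgebra ℂ (Module.End ℂ (Tens N m n)) :=
  Subalgebra.centralizer ℂ (Set.range (glAct N m n))

end Mixed

attribute [local instance] Classical.propDecidable

namespace Mixed

/-- The total content c(ρ) = ∑_{(i,j)∈ρ} (j − i) of a Young diagram. -/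
def content (ρ : YoungDiagram) : ℤ :=
  ∑ c ∈ ρ.cells, ((c.2 : ℤ) - (c.1 : ℤ))

/-- The number of rows ℓ(ρ) of a Young diagram. -/
def nrows (ρ : YoungDiagram) : ℕ := (ρ.cells.image Prod.fst).card

/-- A (bijective) filling of the cells of ρ by {0, …, m−1}. -/
def IsTableau (m : ℕ) (ρ : YoungDiagram) (f : Fin m → ℕ × ℕ) : Prop :=
  Function.Injective f ∧ Set.range f = ↑ρ.cells

/-- p preserves the rows of the filling f. -/
def rowPres {m : ℕ} (f : Fin m → ℕ × ℕ) (p : Equiv.Perm (Fin m)) : Prop :=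
  ∀ x, (f (p x)).1 = (f x).1

/-- q preserves the columns of the filling f. -/
def colPres {m : ℕ} (f : Fin m → ℕ × ℕ) (q : Equiv.Perm (Fin m)) : Prop :=
  ∀ x, (f (q x)).2 = (f x).2

/-- The Young symmetriser c_λ = ∑_{p ∈ Row, q ∈ Col} sgn(q)·pq acting on the
contravariant factors. -/
def ySymU (N m n : ℕ) (f : Fin m → ℕ × ℕ) : Module.End ℂ (Tens N m n) :=
  ∑ p : Equiv.Perm (Fin m), ∑ q : Equiv.Perm (Fin m),
    if rowPres f p ∧ colPres f q then
      (((Equiv.Perm.sign q : ℤ) : ℂ)) • permU N m n (p * q)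
    else 0

/-- The Young symmetriser acting on the covariant factors. -/
def ySymD (N m n : ℕ) (f : Fin n → ℕ × ℕ) : Module.End ℂ (Tens N m n) :=
  ∑ p : Equiv.Perm (Fin n), ∑ q : Equiv.Perm (Fin n),
    if rowPres f p ∧ colPres f q then
      (((Equiv.Perm.sign q : ℤ) : ℂ)) • permD N m n (p * q)
    else 0

/-- The isotypic GL(N)×GL(N)-component of `V^{m,n}` labelled by the pair of
partitions (ρ,σ): the ℂ[𝔖_m×𝔖_n]-submodule generated by the images of the Young
symmetrisers of shapes ρ and σ. -/
def glglComp (N m n : ℕ) (ρ σ : YoungDiagram) : Submodule ℂ (Tens N m n) :=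
  Submodule.span ℂ {x | ∃ (fρ : Fin m → ℕ × ℕ) (fσ : Fin n → ℕ × ℕ),
    IsTableau m ρ fρ ∧ IsTableau n σ fσ ∧
    ∃ (p : Equiv.Perm (Fin m)) (q : Equiv.Perm (Fin n)) (t : Tens N m n),
      x = permU N m n p (permD N m n q (ySymU N m n fρ (ySymD N m n fσ t)))}

end Mixed

namespace Mixed

/-- The GL(N)-equivariant embedding `V^{m-r,n-r} ⊗ E^{⊗r} ↪ V^{m,n}` obtained by
tensoring with r copies of the identity tensor E = ∑ᵢ eᵢ ⊗ eⁱ placed in the last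
r contravariant and covariant slots. -/
def embE (N m n r : ℕ) (hrm : r ≤ m) (hrn : r ≤ n) :
    Tens N (m - r) (n - r) →ₗ[ℂ] Tens N m n where
  toFun t := fun i j =>
    (∏ s : Fin r,
      if i ⟨m - r + s.1, by have := s.2; omega⟩ = j ⟨n - r + s.1, by have := s.2; omega⟩
      then (1 : ℂ) else 0) *
    t (fun x => i (Fin.castLE (Nat.sub_le m r) x)) (fun y => j (Fin.castLE (Nat.sub_le n r) y))
  map_add' t s := by funext i j; simp [mul_add]
  map_smul' c t := by funext i j; simp; ring

/-- The isotypic GL(N)-component of `V^{m,n}` labelled by the pair of partitions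
(μ,ν) with m − |μ| = n − |ν| = r: the C_{m,n}(N)-submodule generated by the
embeddings `W ⊗ E^{⊗r}` of the Young-symmetrised traceless tensors
W ⊆ V₀^{m-r,n-r} of symmetry type (μ,ν). -/
def glIsoComp (N m n r : ℕ) (hrm : r ≤ m) (hrn : r ≤ n) (μ ν : YoungDiagram) :
    Submodule ℂ (Tens N m n) :=
  Submodule.span ℂ {x | ∃ f ∈ Cent N m n,
    ∃ (fμ : Fin (m - r) → ℕ × ℕ) (fν : Fin (n - r) → ℕ × ℕ),
      IsTableau (m - r) μ fμ ∧ IsTableau (n - r) ν fν ∧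
      ∃ t ∈ traceless0 N (m - r) (n - r),
        x = f (embE N m n r hrm hrn
          (ySymU N (m - r) (n - r) fμ (ySymD N (m - r) (n - r) fν t)))}

end Mixed

/-!
Write `ℒ_m` and `ℛ_n` for the sums of all transpositions of the two symmetric groups acting on
`V^{m,n}`. The operator `ℒ_m + ℛ_n - 𝒜_{m,n}` is essentially the Casimir operator of `𝔤𝔩(N)`, so
it commutes with both symmetric groups and does not change, except by `-N`, when an identity tensor
is inserted. It is therefore the scalar `c(μ) + c(ν) - rN` on the piece generated by the tensors
obtained from traceless tensors of symmetry type `(μ, ν)` by inserting `r` identity tensors. On the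
`(ρ, σ)`-part `ℒ_m` and `ℛ_n` are the scalars `c(ρ)` and `c(σ)`, because Young symmetrisers are
eigenvectors of the Jucys–Murphy elements. Subtracting gives `a`.

The pieces span `V^{m,n}`: `𝒜` is self-adjoint with range spanned by the inserted tensors, so
every tensor is the sum of a traceless one and inserted ones, and one inducts on `r`. Pieces with
`r = 0` lie in `ker 𝒜` and pieces with `r ≥ 1` in its range, whence `a = 0 ↔ r = 0`. The containment
`μ ⊆ ρ` is read off from content polynomials: the product of `z + X_i` over the Jucys–Murphy
elements `X_i` acts by the content polynomial of `ρ`, the partial product by that of `μ`, so the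
latter divides the former. The bound on the rows holds because a traceless tensor alternating on
`p` upper and `q` lower slots vanishes when `p + q > N`.
-/

namespace Mixed

open Equiv Polynomial

section JucysMurphy

/-! ### Jucys–Murphy elements -/

/-- The group algebra `ℂ[𝔖_m]`. -/
abbrev SymAlg (m : ℕ) : Type := MonoidAlgebra ℂ (Perm (Fin m))

/-- The canonical embedding `𝔖_m → ℂ[𝔖_m]`. -/
abbrev ofPerm {m : ℕ} : Perm (Fin m) →* SymAlg m := MonoidAlgebra.of ℂ (Perm (Fin m))

/-- The copy of `𝔖_k` inside `𝔖_m` fixing every letter `≥ k` (letters are numbered from `0`). -/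
def permsBelow (m k : ℕ) : Subgroup (Perm (Fin m)) :=
  fixingSubgroup (Perm (Fin m)) {i : Fin m | k ≤ i}

/-- The permutations commuting with a given element of the group algebra. -/
def permCentralizer {m : ℕ} (x : SymAlg m) : Subgroup (Perm (Fin m)) where
  carrier := {p | Commute (ofPerm p) x}
  mul_mem' {p q} hp hq := by
    change Commute (ofPerm (p * q)) x
    exact map_mul ofPerm p q ▸ Commute.mul_left hp hq
  one_mem' := by simp
  inv_mem' {p} hp := by
    calc ofPerm p⁻¹ * x = ofPerm p⁻¹ * (x * ofPerm p) * ofPerm p⁻¹ := by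
          rw [mul_assoc, mul_assoc, ← map_mul, mul_inv_cancel, map_one, mul_one]
      _ = x * ofPerm p⁻¹ := by
          rw [← show ofPerm p * x = x * ofPerm p from hp, ← mul_assoc, ← map_mul, inv_mul_cancel,
            map_one, one_mul]

/-- The Jucys–Murphy element `∑_{j<k} (j k)` of the letter `k`, and `0` if `k ≥ m`. -/
def jm (m k : ℕ) : SymAlg m :=
  if h : k < m then ∑ j ∈ Finset.Iio (⟨k, h⟩ : Fin m), ofPerm (swap j ⟨k, h⟩) else 0

/-- `∏_{i<k} (z + X_i)`, where `X_i` are the Jucys–Murphy elements. -/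
def jmProd (m : ℕ) (z : ℂ) : ℕ → SymAlg m
  | 0 => 1
  | k + 1 => jmProd m z k * (algebraMap ℂ (SymAlg m) z + jm m k)

/-- `∑_{i<k} X_i`, the sum of all transpositions of `𝔖_k`. -/
def jmSum (m k : ℕ) : SymAlg m := ∑ i ∈ Finset.range k, jm m i

/-- The adjacent transposition exchanging the letters `k` and `k + 1`. -/
def adjSwap {m k : ℕ} (h : k + 1 < m) : Perm (Fin m) := swap ⟨k, by omega⟩ ⟨k + 1, h⟩

variable {m k l : ℕ} {p : Perm (Fin m)} {x y : SymAlg m}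

theorem mem_permsBelow : p ∈ permsBelow m k ↔ ∀ i : Fin m, k ≤ i → p i = i := by
  simp [permsBelow, mem_fixingSubgroup_iff]

theorem permsBelow_mono (h : k ≤ l) : permsBelow m k ≤ permsBelow m l :=
  fixingSubgroup_antitone _ _ fun _ hi => h.trans hi

theorem permsBelow_self (m : ℕ) : permsBelow m m = ⊤ :=
  eq_top_iff.2 fun _ _ => mem_permsBelow.2 fun i hi => absurd i.2 hi.not_gt

theorem apply_lt_of_mem_permsBelow (hp : p ∈ permsBelow m k) {i : Fin m} (hi : (i : ℕ) < k) :
    (p i : ℕ) < k := by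
  by_contra! h
  rw [p.injective (mem_permsBelow.1 hp (p i) h)] at h
  exact h.not_gt hi

theorem apply_lt_iff_of_mem_permsBelow (hp : p ∈ permsBelow m k) {i : Fin m} :
    (p i : ℕ) < k ↔ (i : ℕ) < k :=
  ⟨fun hi => by simpa using apply_lt_of_mem_permsBelow (inv_mem hp) hi,
    apply_lt_of_mem_permsBelow hp⟩

theorem permsBelow_one (m : ℕ) : permsBelow m 1 = ⊥ := by
  refine (Subgroup.eq_bot_iff_forall _).2 fun p hp => Equiv.ext fun i => ?_
  rcases Nat.eq_zero_or_pos (i : ℕ) with hi | hi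
  · have := apply_lt_of_mem_permsBelow hp (i := i) (by omega)
    exact Fin.ext (by simp only [Perm.coe_one, id_eq]; omega)
  · exact mem_permsBelow.1 hp i hi

theorem swap_mem_permsBelow {a b : Fin m} (ha : (a : ℕ) < k) (hb : (b : ℕ) < k) :
    swap a b ∈ permsBelow m k :=
  mem_permsBelow.2 fun i hi => swap_apply_of_ne_of_ne
    (Fin.ne_of_val_ne (by omega)) (Fin.ne_of_val_ne (by omega))

theorem swap_eq_conj {α : Type*} [DecidableEq α] {a b c : α} (hbc : b ≠ c) (hac : a ≠ c) :
    swap a c = swap a b * swap b c * swap a b := by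
  rw [mul_swap_eq_swap_mul (swap a b), mul_assoc, swap_mul_self, mul_one, swap_apply_right,
    swap_apply_of_ne_of_ne hac.symm hbc.symm]

theorem swap_mem_of_adjSwap_mem {H : Subgroup (Perm (Fin m))} (hH : permsBelow m (k + 1) ≤ H)
    (h : k + 1 < m) (hs : adjSwap h ∈ H) {a : Fin m} (ha : (a : ℕ) < k + 1) :
    swap a ⟨k + 1, h⟩ ∈ H := by
  set b : Fin m := ⟨k, by omega⟩
  have hab : swap a b ∈ H := hH (swap_mem_permsBelow ha (Nat.lt_succ_self k))
  have hconj : swap a ⟨k + 1, h⟩ = swap a b * adjSwap h * swap a b :=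
    swap_eq_conj (Fin.ne_of_val_ne (by simp [b])) (Fin.ne_of_val_ne (by simp only; omega))
  rw [hconj]
  exact mul_mem (mul_mem hab hs) hab

theorem permsBelow_add_two_le {H : Subgroup (Perm (Fin m))} (hH : permsBelow m (k + 1) ≤ H)
    (hs : ∀ h : k + 1 < m, adjSwap h ∈ H) : permsBelow m (k + 2) ≤ H := by
  intro p hp
  by_cases h : k + 1 < m
  · set c : Fin m := ⟨k + 1, h⟩
    have fixes_of_apply {q : Perm (Fin m)} (hq : q ∈ permsBelow m (k + 2)) (hc : q c = c) :
        q ∈ H := by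
      refine hH (mem_permsBelow.2 fun i hi => ?_)
      rcases hi.eq_or_lt with hi | hi
      · rwa [show i = c from Fin.ext hi.symm]
      · exact mem_permsBelow.1 hq i hi
    by_cases hpc : p c = c
    · exact fixes_of_apply hp hpc
    · have hlt : (p c : ℕ) < k + 2 := apply_lt_of_mem_permsBelow hp (Nat.lt_succ_self _)
      have hne : (p c : ℕ) ≠ k + 1 := fun e => hpc (Fin.ext e)
      have hq : swap (p c) c * p ∈ H := fixes_of_apply
        (mul_mem (swap_mem_permsBelow hlt (Nat.lt_succ_self _)) hp) (by simp)
      simpa [c, ← mul_assoc] using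
        mul_mem (swap_mem_of_adjSwap_mem hH h (hs h) (a := p c) (by omega)) hq
  · exact hH (mem_permsBelow.2 fun i hi => absurd i.2 (by omega))

theorem mem_permCentralizer : p ∈ permCentralizer x ↔ Commute (ofPerm p) x :=
  Iff.rfl

theorem jm_of_lt (h : k < m) :
    jm m k = ∑ j ∈ Finset.Iio (⟨k, h⟩ : Fin m), ofPerm (swap j ⟨k, h⟩) :=
  dif_pos h

theorem permsBelow_le_permCentralizer_jm (m k : ℕ) :
    permsBelow m k ≤ permCentralizer (jm m k) := by
  intro p hp
  rw [mem_permCentralizer]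
  by_cases h : k < m
  · rw [jm_of_lt h, Commute, SemiconjBy, Finset.mul_sum, Finset.sum_mul]
    refine Finset.sum_equiv p (fun j => ?_) (fun j _ => ?_)
    · simp only [Finset.mem_Iio, Fin.lt_def, apply_lt_iff_of_mem_permsBelow hp]
    · rw [← map_mul, ← map_mul, mul_swap_eq_swap_mul, mem_permsBelow.1 hp ⟨k, h⟩ le_rfl]
  · simp [jm, h]

theorem commute_jm_of_permsBelow_le (h : permsBelow m (k + 1) ≤ permCentralizer x) :
    Commute (jm m k) x := by
  by_cases hk : k < m
  · rw [jm_of_lt hk]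
    refine Commute.sum_left _ _ _ fun j hj => mem_permCentralizer.1 (h ?_)
    have hjk : (j : ℕ) < k := Fin.lt_def.1 (Finset.mem_Iio.1 hj)
    exact swap_mem_permsBelow (hjk.trans (Nat.lt_succ_self k)) (Nat.lt_succ_self k)
  · simp [jm, hk]

theorem commute_jm_jm (m k l : ℕ) : Commute (jm m k) (jm m l) := by
  have of_lt {k l : ℕ} (h : k < l) : Commute (jm m k) (jm m l) :=
    commute_jm_of_permsBelow_le ((permsBelow_mono h).trans (permsBelow_le_permCentralizer_jm m l))
  rcases lt_trichotomy k l with h | rfl | h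
  · exact of_lt h
  · exact Commute.refl _
  · exact (of_lt h).symm

theorem jmProd_succ (m : ℕ) (z : ℂ) (k : ℕ) :
    jmProd m z (k + 1) = jmProd m z k * (algebraMap ℂ (SymAlg m) z + jm m k) :=
  rfl

theorem jmSum_succ (m k : ℕ) : jmSum m (k + 1) = jmSum m k + jm m k :=
  Finset.sum_range_succ _ _

theorem commute_jmProd_succ {z : ℂ} (hy : Commute y (jmProd m z k)) (hjm : Commute y (jm m k)) :
    Commute y (jmProd m z (k + 1)) :=
  hy.mul_right ((Algebra.commute_algebraMap_right z _).add_right hjm)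

theorem commute_jmSum_succ (hy : Commute y (jmSum m k)) (hjm : Commute y (jm m k)) :
    Commute y (jmSum m (k + 1)) :=
  jmSum_succ m k ▸ hy.add_right hjm

theorem commute_jm_jmProd (m k l : ℕ) (z : ℂ) : Commute (jm m k) (jmProd m z l) := by
  induction l with
  | zero => exact Commute.one_right _
  | succ l ih => exact commute_jmProd_succ ih (commute_jm_jm m k l)

theorem ofPerm_adjSwap_mul_self (h : k + 1 < m) :
    ofPerm (adjSwap h) * ofPerm (adjSwap h) = (1 : SymAlg m) := by
  rw [← map_mul, adjSwap, swap_mul_self, map_one]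

theorem jm_succ_eq_conj (h : k + 1 < m) :
    jm m (k + 1) = ofPerm (adjSwap h) * jm m k * ofPerm (adjSwap h) + ofPerm (adjSwap h) := by
  set a : Fin m := ⟨k, by omega⟩
  set b : Fin m := ⟨k + 1, h⟩
  have hIio : Finset.Iio b = insert a (Finset.Iio a) := by
    ext j
    simp only [Finset.mem_Iio, Finset.mem_insert, Fin.lt_def, Fin.ext_iff, a, b]
    omega
  have hconj (j : Fin m) (hj : j ∈ Finset.Iio a) :
      swap j b = adjSwap h * swap j a * adjSwap h := by
    have hjk : (j : ℕ) < k := Fin.lt_def.1 (Finset.mem_Iio.1 hj)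
    have hja : j ≠ a := Fin.ne_of_val_ne hjk.ne
    have hjb : j ≠ b := Fin.ne_of_val_ne (by simp only [b]; omega)
    rw [adjSwap, swap_comm j b, swap_comm j a, swap_comm a b]
    exact swap_eq_conj hja.symm hjb.symm
  rw [jm_of_lt h, jm_of_lt (by omega), hIio, Finset.sum_insert (by simp), add_comm,
    Finset.mul_sum, Finset.sum_mul]
  congr 1
  exact Finset.sum_congr rfl fun j hj => by rw [← map_mul, ← map_mul, ← hconj j hj]

theorem adjSwap_mul_jm (h : k + 1 < m) :
    ofPerm (adjSwap h) * jm m k = jm m (k + 1) * ofPerm (adjSwap h) - 1 := by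
  rw [jm_succ_eq_conj h, add_mul, mul_assoc _ (ofPerm (adjSwap h)), ofPerm_adjSwap_mul_self,
    mul_one, add_sub_cancel_right]

theorem adjSwap_mul_jm_succ (h : k + 1 < m) :
    ofPerm (adjSwap h) * jm m (k + 1) = jm m k * ofPerm (adjSwap h) + 1 := by
  rw [jm_succ_eq_conj h, mul_add, ← mul_assoc, ← mul_assoc, ofPerm_adjSwap_mul_self, one_mul]

theorem commute_adjSwap_jm_of_lt (h : k + 1 < m) (hl : l < k) :
    Commute (ofPerm (adjSwap h)) (jm m l) := by
  refine (commute_jm_of_permsBelow_le fun q hq => mem_permCentralizer.2 ?_).symm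
  rw [Commute, SemiconjBy, ← map_mul, ← map_mul, adjSwap, mul_swap_eq_swap_mul,
    mem_permsBelow.1 hq ⟨k, by omega⟩ hl, mem_permsBelow.1 hq ⟨k + 1, h⟩ (by simp only; omega)]

-- `𝔖_{k+2}` is generated by `𝔖_{k+1}` and the adjacent transposition of `k` and `k + 1`.
theorem permsBelow_le_permCentralizer_of_step {F : ℕ → SymAlg m}
    (hzero : ∀ y, Commute y (F 0))
    (hsucc : ∀ {k y}, Commute y (F k) → Commute y (jm m k) → Commute y (F (k + 1)))
    (hadj : ∀ {k} (h : k + 1 < m), Commute (ofPerm (adjSwap h)) (F k) →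
      Commute (ofPerm (adjSwap h)) (F (k + 2))) (k : ℕ) :
    permsBelow m k ≤ permCentralizer (F k) := by
  have commute_adjSwap {k l : ℕ} (h : k + 1 < m) (hl : l ≤ k) :
      Commute (ofPerm (adjSwap h)) (F l) := by
    induction l with
    | zero => exact hzero _
    | succ l ih => exact hsucc (ih (by omega)) (commute_adjSwap_jm_of_lt h hl)
  induction k with
  | zero => exact fun p _ => mem_permCentralizer.2 (hzero _)
  | succ k ih =>
    cases k with
    | zero => exact (permsBelow_one m).trans_le bot_le
    | succ k =>
      refine permsBelow_add_two_le (fun p hp => mem_permCentralizer.2 ?_)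
        fun h => mem_permCentralizer.2 (hadj h (commute_adjSwap h le_rfl))
      exact hsucc (mem_permCentralizer.1 (ih hp))
        (mem_permCentralizer.1 (permsBelow_le_permCentralizer_jm m (k + 1) hp))

theorem commute_adjSwap_mul_add_jm (h : k + 1 < m) (z : ℂ) :
    Commute (ofPerm (adjSwap h))
      ((algebraMap ℂ (SymAlg m) z + jm m k) * (algebraMap ℂ (SymAlg m) z + jm m (k + 1))) := by
  have hsx := adjSwap_mul_jm h
  have hsy := adjSwap_mul_jm_succ h
  have hxy := (commute_jm_jm m k (k + 1)).eq
  have hz (t : SymAlg m) := Algebra.commutes z t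
  generalize ofPerm (adjSwap h) = s at *
  generalize jm m k = x at *
  generalize jm m (k + 1) = y at *
  generalize algebraMap ℂ (SymAlg m) z = c at *
  calc s * ((c + x) * (c + y)) = (s * c + s * x) * (c + y) := by noncomm_ring
    _ = (c * s + (y * s - 1)) * (c + y) := by rw [← hz s, hsx]
    _ = (c + y) * (s * c + s * y) - (c + y) := by noncomm_ring
    _ = (c + y) * (c * s + (x * s + 1)) - (c + y) := by rw [← hz s, hsy]
    _ = (c * c + c * x + y * c + y * x) * s := by noncomm_ring
    _ = (c * c + x * c + c * y + x * y) * s := by rw [hz x, ← hz y, hxy]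
    _ = (c + x) * (c + y) * s := by noncomm_ring

theorem permsBelow_le_permCentralizer_jmProd (z : ℂ) (k : ℕ) :
    permsBelow m k ≤ permCentralizer (jmProd m z k) := by
  refine permsBelow_le_permCentralizer_of_step (F := jmProd m z) Commute.one_right
    commute_jmProd_succ (fun {k} h hk => ?_) k
  rw [jmProd_succ, jmProd_succ, mul_assoc]
  exact hk.mul_right (commute_adjSwap_mul_add_jm h z)

theorem permsBelow_le_permCentralizer_jmSum (k : ℕ) :
    permsBelow m k ≤ permCentralizer (jmSum m k) := by
  refine permsBelow_le_permCentralizer_of_step (F := jmSum m) (by simp [jmSum]) commute_jmSum_succ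
    (fun {k} h hk => ?_) k
  have hadd : Commute (ofPerm (adjSwap h)) (jm m k + jm m (k + 1)) := by
    rw [Commute, SemiconjBy, mul_add, add_mul, adjSwap_mul_jm h, adjSwap_mul_jm_succ h]
    abel
  rw [jmSum_succ, jmSum_succ, add_assoc]
  exact hk.add_right hadd

theorem commute_of_forall_ofPerm (h : ∀ p, Commute (ofPerm p) x) (y : SymAlg m) :
    Commute y x := by
  induction y using MonoidAlgebra.induction_on with
  | of p => exact h p
  | add y z hy hz => exact hy.add_left hz
  | smul c y hy => exact hy.smul_left c

theorem commute_jmProd (z : ℂ) (x : SymAlg m) : Commute x (jmProd m z m) :=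
  commute_of_forall_ofPerm (fun p => mem_permCentralizer.1
    (permsBelow_le_permCentralizer_jmProd z m (permsBelow_self m ▸ Subgroup.mem_top p))) x

theorem commute_jmSum (x : SymAlg m) : Commute x (jmSum m m) :=
  commute_of_forall_ofPerm (fun p => mem_permCentralizer.1
    (permsBelow_le_permCentralizer_jmSum m (permsBelow_self m ▸ Subgroup.mem_top p))) x

end JucysMurphy

section YoungSymmetrisers

/-! ### Young symmetrisers of standard fillings -/

section CharSum

variable {G : Type*} [Group G] [Fintype G]

/-- `∑_{h ∈ H} χ(h) h` in the group algebra, for a multiplicative character `χ`: the symmetriser of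
`H` if `χ = 1`, its antisymmetriser if `χ` is the sign. -/
def charSum (χ : G →* ℂ) (H : Subgroup G) : MonoidAlgebra ℂ G :=
  ∑ h : H, χ h • MonoidAlgebra.of ℂ G h

variable {χ : G →* ℂ} {H K : Subgroup G} {g : G}

theorem of_mul_charSum (hg : g ∈ H) :
    MonoidAlgebra.of ℂ G g * charSum χ H = χ g⁻¹ • charSum χ H := by
  rw [charSum, Finset.mul_sum, Finset.smul_sum]
  refine Fintype.sum_equiv (Equiv.mulLeft (⟨g, hg⟩ : H)) _ _ fun h => ?_
  rw [mul_smul_comm, ← map_mul, smul_smul, ← map_mul]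
  simp

theorem charSum_mul_of (hg : g ∈ H) :
    charSum χ H * MonoidAlgebra.of ℂ G g = χ g⁻¹ • charSum χ H := by
  rw [charSum, Finset.sum_mul, Finset.smul_sum]
  refine Fintype.sum_equiv (Equiv.mulRight (⟨g, hg⟩ : H)) _ _ fun h => ?_
  rw [smul_mul_assoc, ← map_mul, smul_smul, mul_comm (χ g⁻¹), ← map_mul]
  simp

theorem charSum_mul_charSum_of_le (h : H ≤ K) :
    charSum χ H * charSum χ K = (Nat.card H : ℂ) • charSum χ K := by
  have key (g : H) : (χ g • MonoidAlgebra.of ℂ G g) * charSum χ K = charSum χ K := by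
    rw [smul_mul_assoc, of_mul_charSum (h g.2), smul_smul, ← map_mul, mul_inv_cancel, map_one,
      one_smul]
  rw [charSum, Finset.sum_mul, Finset.sum_congr rfl fun g _ => key g, Finset.sum_const,
    Finset.card_univ, Nat.card_eq_fintype_card, Nat.cast_smul_eq_nsmul]

theorem charSum_mul_charSum_of_ge (h : H ≤ K) :
    charSum χ K * charSum χ H = (Nat.card H : ℂ) • charSum χ K := by
  have key (g : H) : charSum χ K * (χ g • MonoidAlgebra.of ℂ G g) = charSum χ K := by
    rw [mul_smul_comm, charSum_mul_of (h g.2), smul_smul, ← map_mul, mul_inv_cancel, map_one,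
      one_smul]
  conv_lhs => rw [charSum.eq_def χ H]
  rw [Finset.mul_sum, Finset.sum_congr rfl fun g _ => key g, Finset.sum_const,
    Finset.card_univ, Nat.card_eq_fintype_card, Nat.cast_smul_eq_nsmul]

theorem commute_charSum {x : MonoidAlgebra ℂ G}
    (hx : ∀ h ∈ H, Commute (MonoidAlgebra.of ℂ G h) x) : Commute (charSum χ H) x :=
  Commute.sum_left _ _ _ fun h _ => (hx h h.2).smul_left _

end CharSum

/-- The permutations preserving every fibre of `g`. -/
def fiberStabilizer {α β : Type*} (g : α → β) : Subgroup (Perm α) where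
  carrier := {p | ∀ x, g (p x) = g x}
  mul_mem' hp hq x := (hp _).trans (hq x)
  one_mem' _ := rfl
  inv_mem' {p} hp x := by simpa using (hp (p⁻¹ x)).symm

/-- The sign of a permutation as a complex number. -/
def signChar (α : Type*) [Fintype α] [DecidableEq α] : Perm α →* ℂ :=
  (Int.castRingHom ℂ : ℤ →* ℂ).comp ((Units.coeHom ℤ).comp Perm.sign)

/-- The row symmetriser of a filling, restricted to the permutations of the letters `< k`. -/
def rowSym {m : ℕ} (f : Fin m → ℕ × ℕ) (k : ℕ) : SymAlg m :=
  charSum 1 (fiberStabilizer (Prod.fst ∘ f) ⊓ permsBelow m k)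

/-- The column antisymmetriser of a filling, restricted to the permutations of the letters `< k`. -/
def colAnti {m : ℕ} (f : Fin m → ℕ × ℕ) (k : ℕ) : SymAlg m :=
  charSum (signChar _) (fiberStabilizer (Prod.snd ∘ f) ⊓ permsBelow m k)

/-- A filling of `ρ` whose letters increase along rows and down columns. -/
structure IsStandard {m : ℕ} (ρ : YoungDiagram) (f : Fin m → ℕ × ℕ) : Prop where
  isTableau : IsTableau m ρ f
  le_of_le : ∀ {i j}, f i ≤ f j → i ≤ j

/-- The content `j - i` of the cell `(i, j)`. -/
def cellContent (c : ℕ × ℕ) : ℂ := (c.2 : ℂ) - (c.1 : ℂ)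

/-- The content of the cell containing the letter `k`, and `0` if there is no such letter. -/
def letterContent {m : ℕ} (f : Fin m → ℕ × ℕ) (k : ℕ) : ℂ :=
  if h : k < m then cellContent (f ⟨k, h⟩) else 0

theorem swap_mem_fiberStabilizer {α β : Type*} [DecidableEq α] {g : α → β} {x y : α}
    (h : g x = g y) : swap x y ∈ fiberStabilizer g := fun z => by
  rcases eq_or_ne z x with rfl | hx
  · simp [h]
  rcases eq_or_ne z y with rfl | hy
  · simp [h]
  rw [swap_apply_of_ne_of_ne hx hy]

theorem signChar_swap {α : Type*} [Fintype α] [DecidableEq α] {x y : α} (h : x ≠ y) :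
    signChar α (swap x y) = -1 := by
  simp [signChar, Perm.sign_swap h]

variable {m k : ℕ} {f : Fin m → ℕ × ℕ} {ρ : YoungDiagram} {x y z : Fin m}

theorem rowSym_mul_swap (h : (f x).1 = (f y).1) (hx : (x : ℕ) < k) (hy : (y : ℕ) < k) :
    rowSym f k * ofPerm (swap x y) = rowSym f k := by
  simpa [rowSym] using charSum_mul_of (χ := 1)
    (Subgroup.mem_inf.2 ⟨swap_mem_fiberStabilizer (g := Prod.fst ∘ f) h, swap_mem_permsBelow hx hy⟩)

theorem swap_mul_colAnti (h : (f x).2 = (f y).2) (hxy : x ≠ y) (hx : (x : ℕ) < k)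
    (hy : (y : ℕ) < k) : ofPerm (swap x y) * colAnti f k = -colAnti f k := by
  simpa [colAnti, signChar_swap hxy] using of_mul_charSum (χ := signChar _)
    (Subgroup.mem_inf.2 ⟨swap_mem_fiberStabilizer (g := Prod.snd ∘ f) h, swap_mem_permsBelow hx hy⟩)

/- The transposition of two letters with a common corner `z` is conjugate to `(z y)` by the row
transposition `(x z)` and to `(x z)` by the column transposition `(z y)`; absorbing the two
gives opposite signs. -/
theorem rowSym_mul_swap_mul_colAnti_eq_zero (hx : (x : ℕ) < k) (hy : (y : ℕ) < k)
    (hz : (z : ℕ) < k) (hxy : x ≠ y) (hzx : z ≠ x) (hzy : z ≠ y) (hrow : (f z).1 = (f x).1)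
    (hcol : (f z).2 = (f y).2) : rowSym f k * ofPerm (swap x y) * colAnti f k = 0 := by
  have absorb_row : rowSym f k * ofPerm (swap x z) = rowSym f k := rowSym_mul_swap hrow.symm hx hz
  have absorb_col : ofPerm (swap z y) * colAnti f k = -colAnti f k :=
    swap_mul_colAnti hcol hzy hz hy
  have conj_row : swap x y = swap x z * swap z y * swap x z := swap_eq_conj hzy hxy
  have conj_col : swap x y = swap z y * swap x z * swap z y := by
    rw [swap_comm x y, swap_comm x z, swap_comm z y]
    exact swap_eq_conj hzx hxy.symm
  have eq_pos : rowSym f k * ofPerm (swap x y) * colAnti f k =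
      rowSym f k * ofPerm (swap z y) * ofPerm (swap x z) * colAnti f k := by
    rw [conj_row, map_mul, map_mul, ← mul_assoc, ← mul_assoc, absorb_row]
  have eq_neg : rowSym f k * ofPerm (swap x y) * colAnti f k =
      -(rowSym f k * ofPerm (swap z y) * ofPerm (swap x z) * colAnti f k) := by
    rw [conj_col, map_mul, map_mul, mul_assoc, mul_assoc, mul_assoc, absorb_col]
    simp only [mul_neg, mul_assoc]
  have eq_neg_self := eq_neg.trans (congrArg Neg.neg eq_pos.symm)
  have : (2 : ℂ) • (rowSym f k * ofPerm (swap x y) * colAnti f k) = 0 := by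
    rw [two_smul]
    exact add_eq_zero_iff_eq_neg.2 eq_neg_self
  exact (smul_eq_zero.1 this).resolve_left two_ne_zero

namespace IsStandard

theorem mem (h : IsStandard ρ f) (i : Fin m) : f i ∈ ρ := by
  rw [← YoungDiagram.mem_cells, ← Finset.mem_coe, ← h.isTableau.2]
  exact Set.mem_range_self i

theorem exists_apply_eq (h : IsStandard ρ f) {c : ℕ × ℕ} (hc : c ∈ ρ) : ∃ i, f i = c := by
  rwa [← YoungDiagram.mem_cells, ← Finset.mem_coe, ← h.isTableau.2] at hc

theorem injective (h : IsStandard ρ f) : Function.Injective f := h.isTableau.1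

theorem transpose (h : IsStandard ρ f) : IsStandard ρ.transpose (Prod.swap ∘ f) where
  isTableau := by
    refine ⟨Prod.swap_injective.comp h.injective, Set.ext fun c => ?_⟩
    rw [Finset.mem_coe, YoungDiagram.mem_cells, YoungDiagram.mem_transpose]
    constructor
    · rintro ⟨i, rfl⟩
      simpa using h.mem i
    · intro hc
      obtain ⟨i, hi⟩ := h.exists_apply_eq hc
      exact ⟨i, by simp [hi]⟩
  le_of_le hij := h.le_of_le (Prod.swap_le_swap.1 hij)

theorem card_lt_same_row (h : IsStandard ρ f) (i : Fin m) :
    ((Finset.Iio i).filter fun j => (f j).1 = (f i).1).card = (f i).2 := by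
  rw [← Finset.card_range (f i).2]
  refine Finset.card_bij (fun j _ => (f j).2) (fun j hj => ?_) (fun j hj l hl e => ?_)
    (fun c hc => ?_)
  · obtain ⟨hlt, hrow⟩ := Finset.mem_filter.1 hj
    by_contra hle
    exact (h.le_of_le ⟨hrow.ge, by simpa using hle⟩).not_gt (Finset.mem_Iio.1 hlt)
  · exact h.injective (Prod.ext
      ((Finset.mem_filter.1 hj).2.trans (Finset.mem_filter.1 hl).2.symm) e)
  · rw [Finset.mem_range] at hc
    obtain ⟨j, hj⟩ := h.exists_apply_eq (ρ.up_left_mem le_rfl hc.le (h.mem i))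
    refine ⟨j, Finset.mem_filter.2 ⟨Finset.mem_Iio.2 (lt_of_le_of_ne ?_ ?_), by rw [hj]⟩,
      by rw [hj]⟩
    · exact h.le_of_le (hj ▸ ⟨le_rfl, hc.le⟩)
    · rintro rfl
      exact hc.ne (congrArg Prod.snd hj).symm

theorem card_lt_same_col (h : IsStandard ρ f) (i : Fin m) :
    ((Finset.Iio i).filter fun j => (f j).2 = (f i).2).card = (f i).1 :=
  h.transpose.card_lt_same_row i

theorem rowSym_mul_swap_mul_colAnti_of_ne (h : IsStandard ρ f) {i j : Fin m} (hji : j < i)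
    (hrow : (f j).1 ≠ (f i).1) (hcol : (f j).2 ≠ (f i).2) :
    rowSym f (i + 1) * ofPerm (swap j i) * colAnti f (i + 1) = 0 := by
  rcases lt_or_gt_of_ne hrow with hlt | hlt
  · obtain ⟨z, hz⟩ := h.exists_apply_eq (ρ.up_left_mem hlt.le le_rfl (h.mem i))
    have hzi : z ≤ i := h.le_of_le (hz ▸ ⟨hlt.le, le_rfl⟩)
    have hzrow : (f z).1 = (f j).1 := by rw [hz]
    have hzcol : (f z).2 = (f i).2 := by rw [hz]
    exact rowSym_mul_swap_mul_colAnti_eq_zero (z := z) (by omega) (by omega) (by omega) hji.ne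
      (fun e => hcol (e ▸ hzcol)) (fun e => hrow (e ▸ hzrow).symm) hzrow hzcol
  · obtain ⟨z, hz⟩ := h.exists_apply_eq (ρ.up_left_mem hlt.le le_rfl (h.mem j))
    have hzj : z ≤ j := h.le_of_le (hz ▸ ⟨hlt.le, le_rfl⟩)
    rw [swap_comm]
    have hzrow : (f z).1 = (f i).1 := by rw [hz]
    have hzcol : (f z).2 = (f j).2 := by rw [hz]
    exact rowSym_mul_swap_mul_colAnti_eq_zero (z := z) (by omega) (by omega) (by omega) hji.ne'
      (fun e => hcol (e ▸ hzcol).symm) (fun e => hrow (e ▸ hzrow)) hzrow hzcol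

theorem rowSym_mul_swap_mul_colAnti (h : IsStandard ρ f) {i j : Fin m} (hji : j < i) :
    rowSym f (i + 1) * ofPerm (swap j i) * colAnti f (i + 1) =
      ((if (f j).1 = (f i).1 then (1 : ℂ) else 0) - if (f j).2 = (f i).2 then (1 : ℂ) else 0) •
        (rowSym f (i + 1) * colAnti f (i + 1)) := by
  by_cases hrow : (f j).1 = (f i).1
  · have hcol : (f j).2 ≠ (f i).2 := fun hcol => hji.ne (h.injective (Prod.ext hrow hcol))
    rw [if_pos hrow, if_neg hcol, rowSym_mul_swap hrow (by omega) (by omega), sub_zero, one_smul]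
  · by_cases hcol : (f j).2 = (f i).2
    · rw [if_neg hrow, if_pos hcol, mul_assoc, swap_mul_colAnti hcol hji.ne (by omega) (by omega),
        zero_sub, neg_one_smul, mul_neg]
    · rw [if_neg hrow, if_neg hcol, sub_zero, zero_smul,
        h.rowSym_mul_swap_mul_colAnti_of_ne hji hrow hcol]

theorem rowSym_mul_jm_mul_colAnti (h : IsStandard ρ f) (hk : k < m) :
    rowSym f (k + 1) * jm m k * colAnti f (k + 1) =
      letterContent f k • (rowSym f (k + 1) * colAnti f (k + 1)) := by
  set i : Fin m := ⟨k, hk⟩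
  have hsum : ∑ j ∈ Finset.Iio i, ((if (f j).1 = (f i).1 then (1 : ℂ) else 0) -
      if (f j).2 = (f i).2 then (1 : ℂ) else 0) = letterContent f k := by
    rw [letterContent, dif_pos hk, cellContent, Finset.sum_sub_distrib, Finset.sum_boole,
      Finset.sum_boole, h.card_lt_same_row, h.card_lt_same_col]
  rw [jm_of_lt hk, Finset.mul_sum, Finset.sum_mul, ← hsum, Finset.sum_smul]
  exact Finset.sum_congr rfl fun j hj =>
    h.rowSym_mul_swap_mul_colAnti (i := i) (Finset.mem_Iio.1 hj)

end IsStandard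

theorem rowSym_succ_mul_mul_mul_colAnti_succ {x y : SymAlg m} {c : ℂ}
    (hx : permsBelow m k ≤ permCentralizer x) (hy : permsBelow m k ≤ permCentralizer y)
    (h : x * (rowSym f k * colAnti f k) = c • (rowSym f k * colAnti f k)) :
    rowSym f (k + 1) * (x * y) * colAnti f (k + 1) =
      c • (rowSym f (k + 1) * y * colAnti f (k + 1)) := by
  set R := rowSym f k
  set C := colAnti f k
  set R' := rowSym f (k + 1)
  set C' := colAnti f (k + 1)
  have hRx : Commute R x := commute_charSum fun p hp => mem_permCentralizer.1 (hx hp.2)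
  have hCy : Commute C y := commute_charSum fun p hp => mem_permCentralizer.1 (hy hp.2)
  obtain ⟨a, ha, hRR⟩ : ∃ a : ℂ, a ≠ 0 ∧ R' * R = a • R' := ⟨_, Nat.cast_ne_zero.2 Nat.card_pos.ne',
    charSum_mul_charSum_of_ge (inf_le_inf_left _ (permsBelow_mono k.le_succ))⟩
  obtain ⟨b, hb, hCC⟩ : ∃ b : ℂ, b ≠ 0 ∧ C * C' = b • C' := ⟨_, Nat.cast_ne_zero.2 Nat.card_pos.ne',
    charSum_mul_charSum_of_le (inf_le_inf_left _ (permsBelow_mono k.le_succ))⟩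
  have absorb (w : SymAlg m) : (a * b) • (R' * w * C') = R' * (R * w * C) * C' := by
    calc (a * b) • (R' * w * C') = (a • R') * w * (b • C') := by
          rw [smul_mul_assoc, smul_mul_assoc, mul_smul_comm, smul_smul]
      _ = R' * (R * w * C) * C' := by rw [← hRR, ← hCC]; noncomm_ring
  have inner : R * (x * y) * C = c • (R * y * C) := by
    calc R * (x * y) * C = (R * x) * (y * C) := by noncomm_ring
      _ = x * (R * C) * y := by rw [hRx.eq, ← hCy.eq]; noncomm_ring
      _ = c • (R * (C * y)) := by rw [h, smul_mul_assoc, mul_assoc]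
      _ = c • (R * y * C) := by rw [hCy.eq, mul_assoc]
  refine smul_right_injective _ (mul_ne_zero ha hb) ?_
  simp only
  rw [absorb, inner, smul_comm (a * b), absorb, mul_smul_comm, smul_mul_assoc]

namespace IsStandard

theorem jmProd_mul (h : IsStandard ρ f) (z : ℂ) (hk : k ≤ m) :
    jmProd m z k * (rowSym f k * colAnti f k) =
      (∏ i ∈ Finset.range k, (z + letterContent f i)) • (rowSym f k * colAnti f k) := by
  induction k with
  | zero => simp [jmProd]
  | succ k ih =>
    have hy : permsBelow m k ≤ permCentralizer (algebraMap ℂ (SymAlg m) z + jm m k) := fun p hp =>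
      (Algebra.commute_algebraMap_right z _).add_right (permsBelow_le_permCentralizer_jm m k hp)
    have hcomm : Commute (rowSym f (k + 1)) (jmProd m z (k + 1)) := commute_charSum fun p hp =>
      mem_permCentralizer.1 (permsBelow_le_permCentralizer_jmProd z (k + 1) hp.2)
    rw [← mul_assoc, ← hcomm.eq, jmProd_succ, rowSym_succ_mul_mul_mul_colAnti_succ
      (permsBelow_le_permCentralizer_jmProd z k) hy (ih (by omega)), mul_add, add_mul,
      h.rowSym_mul_jm_mul_colAnti hk, ← Algebra.commutes, mul_assoc, ← Algebra.smul_def,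
      ← add_smul, smul_smul, Finset.prod_range_succ]

theorem jmSum_mul (h : IsStandard ρ f) (hk : k ≤ m) :
    jmSum m k * (rowSym f k * colAnti f k) =
      (∑ i ∈ Finset.range k, letterContent f i) • (rowSym f k * colAnti f k) := by
  induction k with
  | zero => simp [jmSum]
  | succ k ih =>
    have hcomm : Commute (rowSym f (k + 1)) (jmSum m (k + 1)) := commute_charSum fun p hp =>
      mem_permCentralizer.1 (permsBelow_le_permCentralizer_jmSum (k + 1) hp.2)
    have step := rowSym_succ_mul_mul_mul_colAnti_succ (y := 1)
      (permsBelow_le_permCentralizer_jmSum k) (fun p _ => Commute.one_right _) (ih (by omega))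
    rw [mul_one, mul_one] at step
    rw [← mul_assoc, ← hcomm.eq, jmSum_succ, mul_add, add_mul, step,
      h.rowSym_mul_jm_mul_colAnti hk, ← add_smul, Finset.sum_range_succ]

end IsStandard

end YoungSymmetrisers

section CentralYoung

/-! ### Content polynomials -/

/-- The content polynomial `∏_{c ∈ ρ} (X + content of c)`; its roots determine `ρ`. -/
def contentPoly (ρ : YoungDiagram) : ℂ[X] := ∏ c ∈ ρ.cells, (X + C (cellContent c))

/-- The Young diagram of a partition. -/
def partDiagram {m : ℕ} (p : m.Partition) : YoungDiagram :=
  YoungDiagram.ofRowLens (p.parts.sort (· ≥ ·)) (Multiset.pairwise_sort _ _).sortedGE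

theorem contentPoly_ne_zero (ρ : YoungDiagram) : contentPoly ρ ≠ 0 :=
  Finset.prod_ne_zero_iff.2 fun _ _ => X_add_C_ne_zero _

theorem roots_contentPoly (ρ : YoungDiagram) :
    (contentPoly ρ).roots = ρ.cells.val.map fun c => -cellContent c := by
  have : contentPoly ρ = ((ρ.cells.val.map fun c => -cellContent c).map fun a => X - C a).prod := by
    rw [contentPoly, Finset.prod, Multiset.map_map]
    exact congrArg _ (Multiset.map_congr rfl fun c _ => by simp)
  rw [this, roots_multiset_prod_X_sub_C]

theorem cellContent_eq_iff {c d : ℕ × ℕ} :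
    cellContent c = cellContent d ↔ c.2 + d.1 = d.2 + c.1 := by
  rw [cellContent, cellContent, sub_eq_sub_iff_add_eq_add]
  norm_cast

/- On each diagonal the cells of a diagram form an initial segment, so comparing the numbers of
cells of a given content compares the diagrams. -/
theorem le_of_contentPoly_dvd {μ ρ : YoungDiagram} (h : contentPoly μ ∣ contentPoly ρ) : μ ≤ ρ := by
  have hcount (a : ℂ) : (μ.cells.filter fun c => a = -cellContent c).card ≤
      (ρ.cells.filter fun c => a = -cellContent c).card := by
    have hle := Multiset.count_le_of_le a (roots.le_of_dvd (contentPoly_ne_zero ρ) h)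
    rwa [roots_contentPoly, roots_contentPoly, Multiset.count_map, Multiset.count_map] at hle
  rintro ⟨i, j⟩ hμ
  by_contra hρ
  refine (hcount (-cellContent (i, j))).not_gt (Finset.card_lt_card ?_)
  refine (Finset.ssubset_iff_of_subset ?_).2 ⟨(i, j), by simpa using hμ, by simpa using hρ⟩
  rintro ⟨a, b⟩ hab
  simp only [Finset.mem_filter, neg_inj, YoungDiagram.mem_cells, cellContent_eq_iff] at hab ⊢
  refine ⟨?_, hab.2⟩
  have ha : a < i := by
    by_contra! hia
    exact hρ (ρ.up_left_mem hia (by omega) hab.1)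
  exact μ.up_left_mem ha.le (by omega) hμ

theorem contentPoly_injective : Function.Injective contentPoly := fun _ _ h =>
  le_antisymm (le_of_contentPoly_dvd h.dvd) (le_of_contentPoly_dvd h.symm.dvd)

theorem exists_injective_eval {ι R : Type*} [Finite ι] [CommRing R] [IsDomain R] [Infinite R]
    {P : ι → R[X]} (hP : Function.Injective P) : ∃ z, Function.Injective fun i => (P i).eval z := by
  have := Fintype.ofFinite ι
  have hne : ∏ x ∈ (Finset.univ : Finset ι).offDiag, (P x.1 - P x.2) ≠ 0 :=
    Finset.prod_ne_zero_iff.2 fun x hx => sub_ne_zero.2 (hP.ne (Finset.mem_offDiag.1 hx).2.2)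
  obtain ⟨z, hz⟩ : ∃ z, (∏ x ∈ (Finset.univ : Finset ι).offDiag, (P x.1 - P x.2)).eval z ≠ 0 := by
    by_contra! h
    exact hne (Polynomial.funext fun z => by simpa using h z)
  refine ⟨z, fun i j hij => ?_⟩
  by_contra hne
  rw [eval_prod, Finset.prod_ne_zero_iff] at hz
  exact hz (i, j) (by simpa using hne) (by simpa [sub_eq_zero] using hij)

theorem card_cellsOfRowLens (w : List ℕ) : (YoungDiagram.cellsOfRowLens w).card = w.sum := by
  induction w with
  | nil => simp [YoungDiagram.cellsOfRowLens]
  | cons w ws ih =>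
    rw [YoungDiagram.cellsOfRowLens, Finset.card_union_of_disjoint]
    · simp [ih]
    · refine Finset.disjoint_left.2 fun c hc hc' => ?_
      simp only [Finset.mem_product, Finset.mem_singleton, Finset.mem_map] at hc hc'
      obtain ⟨d, -, rfl⟩ := hc'
      exact absurd hc.1 (by simp)

theorem card_partDiagram {m : ℕ} (p : m.Partition) : (partDiagram p).card = m := by
  rw [YoungDiagram.card, partDiagram, YoungDiagram.ofRowLens, card_cellsOfRowLens,
    ← Multiset.sum_coe, Multiset.sort_eq, p.parts_sum]

theorem partDiagram_injective {m : ℕ} : Function.Injective (partDiagram (m := m)) := by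
  intro p q h
  have rowLens_partDiagram (p : m.Partition) : (partDiagram p).rowLens = p.parts.sort (· ≥ ·) :=
    YoungDiagram.rowLens_ofRowLens_eq_self fun _ hx => p.parts_pos ((Multiset.mem_sort _).1 hx)
  have hsort : p.parts.sort (· ≥ ·) = q.parts.sort (· ≥ ·) := by
    rw [← rowLens_partDiagram, ← rowLens_partDiagram, h]
  rw [Nat.Partition.ext_iff, ← Multiset.sort_eq p.parts (· ≥ ·), hsort, Multiset.sort_eq]

/-! ### Central Young elements -/

/-- The cells of `ρ` listed in lexicographic order. -/
def stdFilling {m : ℕ} (ρ : YoungDiagram) (h : ρ.card = m) (i : Fin m) : ℕ × ℕ :=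
  ofLex ((ρ.cells.map toLex.toEmbedding).orderEmbOfFin ((Finset.card_map _).trans h) i)

theorem isStandard_stdFilling {m : ℕ} (ρ : YoungDiagram) (h : ρ.card = m) :
    IsStandard ρ (stdFilling ρ h) where
  isTableau := by
    refine ⟨fun i j hij => RelEmbedding.injective _ (ofLex.injective hij), ?_⟩
    have hrange : Set.range (stdFilling ρ h) = ofLex '' Set.range
        ((ρ.cells.map toLex.toEmbedding).orderEmbOfFin ((Finset.card_map _).trans h)) :=
      Set.range_comp ofLex _
    rw [hrange, Finset.range_orderEmbOfFin]
    ext c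
    simp
  le_of_le {i j} hij :=
    ((ρ.cells.map toLex.toEmbedding).orderEmbOfFin ((Finset.card_map _).trans h)).le_iff_le.1
      (Prod.Lex.toLex_mono (a := stdFilling ρ h i) (b := stdFilling ρ h j) hij)

/-- The standard filling of the Young diagram of a partition. -/
def partFilling {m : ℕ} (p : m.Partition) : Fin m → ℕ × ℕ :=
  stdFilling (partDiagram p) (card_partDiagram p)

theorem isStandard_partFilling {m : ℕ} (p : m.Partition) :
    IsStandard (partDiagram p) (partFilling p) :=
  isStandard_stdFilling _ _

/-- The Young symmetriser of a filling. -/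
def youngSym {m : ℕ} (f : Fin m → ℕ × ℕ) : SymAlg m := rowSym f m * colAnti f m

/-- The Young symmetriser of the standard filling of a partition, averaged over conjugation (up to
a scalar, the central idempotent of the Specht module). -/
def centralYoung {m : ℕ} (p : m.Partition) : SymAlg m :=
  ∑ g, ofPerm g * youngSym (partFilling p) * ofPerm g⁻¹

theorem univ_map_of_isTableau {m : ℕ} {ρ : YoungDiagram} {f : Fin m → ℕ × ℕ}
    (h : IsTableau m ρ f) : Finset.univ.map ⟨f, h.1⟩ = ρ.cells := by
  rw [← Finset.coe_inj, Finset.coe_map, Finset.coe_univ, Set.image_univ]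
  exact h.2

namespace IsStandard

variable {m : ℕ} {ρ : YoungDiagram} {f : Fin m → ℕ × ℕ}

theorem jmProd_mul_youngSym (h : IsStandard ρ f) (z : ℂ) :
    jmProd m z m * youngSym f = (contentPoly ρ).eval z • youngSym f := by
  rw [youngSym, h.jmProd_mul z le_rfl, Finset.prod_range, contentPoly,
    ← univ_map_of_isTableau h.isTableau, Finset.prod_map, eval_prod]
  simp [letterContent]

theorem jmSum_mul_youngSym (h : IsStandard ρ f) :
    jmSum m m * youngSym f = (content ρ : ℂ) • youngSym f := by
  rw [youngSym, h.jmSum_mul le_rfl, Finset.sum_range, content,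
    ← univ_map_of_isTableau h.isTableau, Finset.sum_map]
  simp [letterContent, cellContent]

end IsStandard

section GroupAlgebra

variable {G : Type*} [Group G]

theorem coeff_conj (g h : G) (x : MonoidAlgebra ℂ G) :
    (MonoidAlgebra.of ℂ G g * x * MonoidAlgebra.of ℂ G g⁻¹).coeff h = x.coeff (g⁻¹ * h * g) := by
  simp [MonoidAlgebra.of_apply, mul_assoc]

theorem coeff_one_charSum_mul_charSum [Fintype G] {χ ψ : G →* ℂ} {H K : Subgroup G}
    (h : H ⊓ K = ⊥) :
    (charSum χ H * charSum ψ K).coeff 1 = 1 := by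
  have hone (a : H) (b : K) : (a : G) * b = 1 ↔ (a, b) = (1, 1) := by
    refine ⟨fun hab => ?_, fun hab => by simp_all⟩
    have ha : (a : G) ∈ H ⊓ K :=
      ⟨a.2, eq_inv_of_mul_eq_one_left hab ▸ K.inv_mem b.2⟩
    rw [h, Subgroup.mem_bot] at ha
    rw [ha, one_mul] at hab
    exact Prod.ext (Subtype.ext ha) (Subtype.ext hab)
  have hcoeff (x : H × K) : ((χ x.1 • MonoidAlgebra.of ℂ G x.1) *
      (ψ x.2 • MonoidAlgebra.of ℂ G x.2)).coeff 1 = if x = (1, 1) then 1 else 0 := by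
    rw [smul_mul_smul_comm, ← map_mul, MonoidAlgebra.of_apply, MonoidAlgebra.coeff_smul,
      MonoidAlgebra.coeff_single, Finsupp.smul_apply, Finsupp.single_apply]
    simp only [hone]
    split_ifs with hx
    · obtain rfl : x = (1, 1) := hx
      simp
    · simp
  rw [charSum, charSum, Finset.sum_mul_sum, ← Finset.sum_product', MonoidAlgebra.coeff_sum,
    Finset.sum_apply', Finset.sum_congr rfl fun x _ => hcoeff x]
  simp

theorem finrank_center_le_card_conjClasses [Finite G] :
    Module.finrank ℂ (Subalgebra.center ℂ (MonoidAlgebra ℂ G)) ≤ Nat.card (ConjClasses G) := by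
  let coeffs : Subalgebra.center ℂ (MonoidAlgebra ℂ G) →ₗ[ℂ] ConjClasses G → ℂ :=
    { toFun := fun x c => (x : MonoidAlgebra ℂ G).coeff c.out
      map_add' := fun _ _ => rfl
      map_smul' := fun _ _ => rfl }
  have coeff_eq (x : Subalgebra.center ℂ (MonoidAlgebra ℂ G)) (g : G) :
      (x : MonoidAlgebra ℂ G).coeff g = coeffs x (ConjClasses.mk g) := by
    have hconj : IsConj (ConjClasses.mk g).out g :=
      ConjClasses.mk_eq_mk_iff_isConj.1 (Quotient.out_eq _)
    obtain ⟨c, hc⟩ := isConj_iff.1 hconj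
    have hx : MonoidAlgebra.of ℂ G c * x * MonoidAlgebra.of ℂ G c⁻¹ = x := by
      rw [Subalgebra.mem_center_iff.1 x.2, mul_assoc, ← map_mul, mul_inv_cancel, map_one, mul_one]
    conv_lhs => rw [← hx, coeff_conj, ← hc]
    change _ = (x : MonoidAlgebra ℂ G).coeff _
    congr 1
    group
  have hinj : Function.Injective coeffs := fun x y hxy => by
    refine Subtype.ext (MonoidAlgebra.ext (Finsupp.ext fun g => ?_))
    rw [coeff_eq, coeff_eq, hxy]
  have := Fintype.ofFinite (ConjClasses G)
  have hle := LinearMap.finrank_le_finrank_of_injective hinj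
  rwa [Module.finrank_fintype_fun_eq_card, ← Nat.card_eq_fintype_card] at hle

end GroupAlgebra

variable {m : ℕ}

theorem card_conjClasses_perm_le (m : ℕ) :
    Nat.card (ConjClasses (Perm (Fin m))) ≤ Nat.card m.Partition := by
  have hcard : Nat.card (Fintype.card (Fin m)).Partition = Nat.card m.Partition := by
    rw [Fintype.card_fin]
  let cycleType : ConjClasses (Perm (Fin m)) → (Fintype.card (Fin m)).Partition :=
    Quotient.lift Perm.partition fun _ _ h => Perm.partition_eq_of_isConj.1 h
  have hinj : Function.Injective cycleType := by
    rintro ⟨p⟩ ⟨q⟩ h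
    exact Quotient.sound (Perm.partition_eq_of_isConj.2 h)
  exact hcard ▸ Nat.card_le_card_of_injective cycleType hinj

theorem coeff_one_youngSym {f : Fin m → ℕ × ℕ} (hf : Function.Injective f) :
    (youngSym f).coeff 1 = 1 := by
  refine coeff_one_charSum_mul_charSum (eq_bot_iff.2 fun p hp => ?_)
  exact Subgroup.mem_bot.2 (Equiv.ext fun x => hf (Prod.ext (hp.1.1 x) (hp.2.1 x)))

theorem centralYoung_ne_zero (p : m.Partition) : centralYoung p ≠ 0 := by
  intro h
  have hcoeff := congrArg (fun x : SymAlg m => x.coeff 1) h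
  simp only [centralYoung, MonoidAlgebra.coeff_sum, Finset.sum_apply', coeff_conj, mul_one,
    inv_mul_cancel, coeff_one_youngSym (isStandard_partFilling p).injective]
    at hcoeff
  simp at hcoeff

theorem commute_centralYoung (p : m.Partition) (x : SymAlg m) : Commute x (centralYoung p) := by
  refine commute_of_forall_ofPerm (fun g => ?_) x
  rw [Commute, SemiconjBy, centralYoung, Finset.mul_sum, Finset.sum_mul]
  refine Fintype.sum_equiv (Equiv.mulLeft g) _ _ fun h => ?_
  rw [Equiv.coe_mulLeft, mul_assoc _ (ofPerm _) (ofPerm g), ← map_mul, mul_inv_rev,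
    inv_mul_cancel_right, map_mul, mul_assoc, mul_assoc, mul_assoc]

theorem mul_centralYoung {x : SymAlg m} (hx : ∀ y, Commute y x) {p : m.Partition} {c : ℂ}
    (h : x * youngSym (partFilling p) = c • youngSym (partFilling p)) :
    x * centralYoung p = c • centralYoung p := by
  rw [centralYoung, Finset.mul_sum, Finset.smul_sum]
  refine Finset.sum_congr rfl fun g _ => ?_
  rw [← mul_assoc, ← mul_assoc, ← (hx (ofPerm g)).eq, mul_assoc (ofPerm g), h, mul_smul_comm,
    smul_mul_assoc]

theorem jmProd_mul_centralYoung (p : m.Partition) (z : ℂ) :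
    jmProd m z m * centralYoung p = (contentPoly (partDiagram p)).eval z • centralYoung p :=
  mul_centralYoung (commute_jmProd z) ((isStandard_partFilling p).jmProd_mul_youngSym z)

theorem jmSum_mul_centralYoung (p : m.Partition) :
    jmSum m m * centralYoung p = (content (partDiagram p) : ℂ) • centralYoung p :=
  mul_centralYoung commute_jmSum (isStandard_partFilling p).jmSum_mul_youngSym

theorem linearIndependent_centralYoung (m : ℕ) :
    LinearIndependent ℂ (centralYoung : m.Partition → SymAlg m) := by
  obtain ⟨z, hz⟩ := exists_injective_eval
    (contentPoly_injective.comp (partDiagram_injective (m := m)))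
  exact Module.End.eigenvectors_linearIndependent' (LinearMap.mulLeft ℂ (jmProd m z m)) _ hz _
    fun p => Module.End.hasEigenvector_iff.2
      ⟨Module.End.mem_eigenspace_iff.2 (jmProd_mul_centralYoung p z), centralYoung_ne_zero p⟩

theorem one_mem_span_centralYoung (m : ℕ) :
    (1 : SymAlg m) ∈ Submodule.span ℂ (Set.range (centralYoung : m.Partition → SymAlg m)) := by
  let v (p : m.Partition) : Subalgebra.center ℂ (SymAlg m) :=
    ⟨centralYoung p, Subalgebra.mem_center_iff.2 fun x => commute_centralYoung p x⟩
  have hv : LinearIndependent ℂ v := LinearIndependent.of_comp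
    (Subalgebra.center ℂ (SymAlg m)).val.toLinearMap (linearIndependent_centralYoung m)
  have hcard : Fintype.card m.Partition = Module.finrank ℂ (Subalgebra.center ℂ (SymAlg m)) := by
    refine le_antisymm hv.fintype_card_le_finrank ?_
    rw [← Nat.card_eq_fintype_card]
    exact finrank_center_le_card_conjClasses.trans (card_conjClasses_perm_le m)
  have hone : (1 : Subalgebra.center ℂ (SymAlg m)) ∈ Submodule.span ℂ (Set.range v) :=
    hv.span_eq_top_of_card_eq_finrank' hcard ▸ Submodule.mem_top
  have hmap := Submodule.mem_map_of_mem
    (f := (Subalgebra.center ℂ (SymAlg m)).val.toLinearMap) hone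
  rwa [Submodule.map_span, ← Set.range_comp] at hmap

end CentralYoung

section MixedTensors

/-! ### The symmetric groups acting on mixed tensors -/

/-- The action of `ℂ[𝔖_m]` on the contravariant factors. -/
def actU (N m n : ℕ) : SymAlg m →ₐ[ℂ] Module.End ℂ (Tens N m n) :=
  MonoidAlgebra.lift ℂ (Module.End ℂ (Tens N m n)) (Perm (Fin m))
    { toFun := permU N m n, map_one' := rfl, map_mul' := fun _ _ => rfl }

/-- The action of `ℂ[𝔖_n]` on the covariant factors. -/
def actD (N m n : ℕ) : SymAlg n →ₐ[ℂ] Module.End ℂ (Tens N m n) :=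
  MonoidAlgebra.lift ℂ (Module.End ℂ (Tens N m n)) (Perm (Fin n))
    { toFun := permD N m n, map_one' := rfl, map_mul' := fun _ _ => rfl }

/-- The standard Hermitian inner product of the components of two tensors. -/
def tensForm (N m n : ℕ) : Tens N m n →ₗ⋆[ℂ] Tens N m n →ₗ[ℂ] ℂ :=
  LinearMap.mk₂'ₛₗ (starRingEnd ℂ) (RingHom.id ℂ)
    (fun x y => ∑ w : (Fin m → Fin N) × (Fin n → Fin N), star (x w.1 w.2) * y w.1 w.2)
    (fun _ _ _ => by simp [add_mul, Finset.sum_add_distrib])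
    (fun _ _ _ => by simp [mul_assoc, Finset.mul_sum])
    (fun _ _ _ => by simp [mul_add, Finset.sum_add_distrib])
    (fun _ _ _ => by simp [mul_left_comm, Finset.mul_sum])

variable {N m n : ℕ}

theorem actU_ofPerm (p : Perm (Fin m)) : actU N m n (ofPerm p) = permU N m n p :=
  MonoidAlgebra.lift_of _ _

theorem actD_ofPerm (q : Perm (Fin n)) : actD N m n (ofPerm q) = permD N m n q :=
  MonoidAlgebra.lift_of _ _

theorem actU_mul_actD_mem {S : Submodule ℂ (Module.End ℂ (Tens N m n))}
    (h : ∀ p q, permU N m n p * permD N m n q ∈ S) (x : SymAlg m) (y : SymAlg n) :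
    actU N m n x * actD N m n y ∈ S := by
  induction x using MonoidAlgebra.induction_on with
  | of p =>
    induction y using MonoidAlgebra.induction_on with
    | of q => simpa only [actU_ofPerm, actD_ofPerm] using h p q
    | add y y' hy hy' => simpa only [map_add, mul_add] using add_mem hy hy'
    | smul c y hy => simpa only [map_smul, mul_smul_comm] using S.smul_mem c hy
  | add x x' hx hx' => simpa only [map_add, add_mul] using add_mem hx hx'
  | smul c x hx => simpa only [map_smul, smul_mul_assoc] using S.smul_mem c hx

theorem commute_permU_permD (p : Perm (Fin m)) (q : Perm (Fin n)) :
    Commute (permU N m n p) (permD N m n q) :=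
  rfl

theorem commute_actU_actD (x : SymAlg m) (y : SymAlg n) :
    Commute (actU N m n x) (actD N m n y) := by
  induction x using MonoidAlgebra.induction_on with
  | of p =>
    induction y using MonoidAlgebra.induction_on with
    | of q => simpa only [actU_ofPerm, actD_ofPerm] using commute_permU_permD p q
    | add y y' hy hy' => simpa only [map_add] using hy.add_right hy'
    | smul c y hy => simpa only [map_smul] using hy.smul_right c
  | add x x' hx hx' => simpa only [map_add] using hx.add_left hx'
  | smul c x hx => simpa only [map_smul] using hx.smul_left c

theorem commute_actU_mul_actD {F : Module.End ℂ (Tens N m n)}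
    (h : ∀ p q, Commute (permU N m n p * permD N m n q) F) (x : SymAlg m) (y : SymAlg n) :
    Commute (actU N m n x * actD N m n y) F := by
  have hmem := actU_mul_actD_mem (S := Subalgebra.toSubmodule (Subalgebra.centralizer ℂ {F}))
    (fun p q => Subalgebra.mem_centralizer_iff ℂ |>.2 fun _ hF => by
      rw [Set.mem_singleton_iff.1 hF, (h p q).eq]) x y
  exact (Subalgebra.mem_centralizer_iff ℂ |>.1 hmem F rfl).symm

theorem charSum_eq_sum_ite {G : Type*} [Group G] [Fintype G] (χ : G →* ℂ) (H : Subgroup G) :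
    charSum χ H = ∑ g, if g ∈ H then χ g • MonoidAlgebra.of ℂ G g else 0 := by
  rw [← Finset.sum_filter, charSum]
  exact (Finset.sum_subtype _ (fun g => by simp) fun g => χ g • MonoidAlgebra.of ℂ G g).symm

theorem youngSym_eq_sum (f : Fin m → ℕ × ℕ) :
    youngSym f = ∑ p : Perm (Fin m), ∑ q : Perm (Fin m), if rowPres f p ∧ colPres f q then
      ((Perm.sign q : ℤ) : ℂ) • ofPerm (p * q) else 0 := by
  rw [youngSym, rowSym, colAnti, permsBelow_self, inf_top_eq, inf_top_eq, charSum_eq_sum_ite,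
    charSum_eq_sum_ite, Finset.sum_mul_sum]
  refine Finset.sum_congr rfl fun p _ => Finset.sum_congr rfl fun q _ => ?_
  have hp : p ∈ fiberStabilizer (Prod.fst ∘ f) ↔ rowPres f p := Iff.rfl
  have hq : q ∈ fiberStabilizer (Prod.snd ∘ f) ↔ colPres f q := Iff.rfl
  rw [ite_zero_mul_ite_zero, hp, hq, MonoidHom.one_apply, one_smul, mul_smul_comm, map_mul]
  rfl

theorem actU_youngSym (f : Fin m → ℕ × ℕ) : actU N m n (youngSym f) = ySymU N m n f := by
  simp only [youngSym_eq_sum, ySymU, map_sum, apply_ite (actU N m n), map_smul, actU_ofPerm,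
    map_zero]

theorem actD_youngSym (f : Fin n → ℕ × ℕ) : actD N m n (youngSym f) = ySymD N m n f := by
  simp only [youngSym_eq_sum, ySymD, map_sum, apply_ite (actD N m n), map_smul, actD_ofPerm,
    map_zero]

theorem permU_mul_permD_mul_tauC (p : Perm (Fin m)) (q : Perm (Fin n)) (a : Fin m) (b : Fin n) :
    permU N m n p * permD N m n q * tauC N m n a b =
      tauC N m n (p a) (q b) * (permU N m n p * permD N m n q) := by
  have update_comp {k : ℕ} (i : Fin k → Fin N) (p : Perm (Fin k)) (a : Fin k) (c : Fin N) :
      Function.update (i ∘ p) a c = Function.update i (p a) c ∘ p := by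
    rw [Function.update_comp_eq_of_injective _ p.injective]
  refine LinearMap.ext fun t => funext fun i => funext fun j => ?_
  change (if i (p a) = j (q b) then
      ∑ k, t (Function.update (i ∘ p) a k) (Function.update (j ∘ q) b k) else 0) =
    if i (p a) = j (q b) then
      ∑ k, t (Function.update i (p a) k ∘ p) (Function.update j (q b) k ∘ q) else 0
  simp only [update_comp]

theorem commute_actU_mul_actD_A (x : SymAlg m) (y : SymAlg n) :
    Commute (actU N m n x * actD N m n y) (A N m n) := by
  refine commute_actU_mul_actD (fun p q => ?_) x y
  rw [Commute, SemiconjBy, A, Finset.mul_sum, Finset.sum_mul]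
  refine Fintype.sum_equiv p _ _ fun a => ?_
  rw [Finset.mul_sum, Finset.sum_mul]
  exact Fintype.sum_equiv q _ _ fun b => permU_mul_permD_mul_tauC p q a b

theorem permU_mul_permD_mem_cent (p : Perm (Fin m)) (q : Perm (Fin n)) :
    permU N m n p * permD N m n q ∈ Cent N m n := by
  refine (Subalgebra.mem_centralizer_iff ℂ).2 ?_
  rintro _ ⟨g, rfl⟩
  refine LinearMap.ext fun t => funext fun i => funext fun j => ?_
  refine Fintype.sum_equiv (Equiv.arrowCongr p.symm (Equiv.refl _)) _ _ fun i' =>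
    Fintype.sum_equiv (Equiv.arrowCongr q.symm (Equiv.refl _)) _ _ fun j' => ?_
  refine congrArg₂ (· * ·) (congrArg₂ (· * ·) ?_ ?_) rfl
  · exact (Equiv.prod_comp p fun a => (g : Matrix (Fin N) (Fin N) ℂ) (i a) (i' a)).symm
  · exact (Equiv.prod_comp q fun b =>
      ((g⁻¹ : GL (Fin N) ℂ) : Matrix (Fin N) (Fin N) ℂ) (j' b) (j b)).symm

theorem actU_mul_actD_mem_cent (x : SymAlg m) (y : SymAlg n) :
    actU N m n x * actD N m n y ∈ Cent N m n :=
  actU_mul_actD_mem (S := Subalgebra.toSubmodule (Cent N m n)) permU_mul_permD_mem_cent x y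

/-! ### Traceless tensors are the kernel of `𝒜` -/

theorem tensForm_apply (x y : Tens N m n) :
    tensForm N m n x y =
      ∑ w : (Fin m → Fin N) × (Fin n → Fin N), star (x w.1 w.2) * y w.1 w.2 :=
  rfl

theorem tauC_apply (a : Fin m) (b : Fin n) (x : Tens N m n) (i : Fin m → Fin N)
    (j : Fin n → Fin N) : tauC N m n a b x i j = if i a = j b then
      ∑ k, x (Function.update i a k) (Function.update j b k) else 0 :=
  rfl

open ComplexOrder in
theorem tensForm_self_nonneg (x : Tens N m n) : 0 ≤ tensForm N m n x x :=
  dotProduct_star_self_nonneg (Function.uncurry x)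

open ComplexOrder in
theorem tensForm_self_eq_zero {x : Tens N m n} : tensForm N m n x x = 0 ↔ x = 0 := by
  refine ⟨fun h => ?_, fun h => by rw [h, map_zero]⟩
  have huncurry : Function.uncurry x = 0 := dotProduct_star_self_eq_zero.1 h
  ext i j
  exact congrFun huncurry (i, j)

theorem tensForm_tauC_left (a : Fin m) (b : Fin n) (x y : Tens N m n) :
    tensForm N m n (tauC N m n a b x) y = tensForm N m n x (tauC N m n a b y) := by
  let contractible : Finset (((Fin m → Fin N) × (Fin n → Fin N)) × Fin N) :=
    Finset.univ.filter fun w => w.1.1 a = w.1.2 b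
  let exchange (w : ((Fin m → Fin N) × (Fin n → Fin N)) × Fin N) :
      ((Fin m → Fin N) × (Fin n → Fin N)) × Fin N :=
    ((Function.update w.1.1 a w.2, Function.update w.1.2 b w.2), w.1.1 a)
  have exchange_exchange : ∀ w ∈ contractible, exchange (exchange w) = w := by
    rintro ⟨⟨i, j⟩, k⟩ hw
    have hij : i a = j b := by simpa [contractible] using hw
    simp only [exchange, Function.update_self, Function.update_idem, Function.update_eq_self]
    rw [hij, Function.update_eq_self]
  have exchange_mem : ∀ w ∈ contractible, exchange w ∈ contractible := fun w _ => by
    simp [contractible, exchange]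
  calc tensForm N m n (tauC N m n a b x) y
      = ∑ w ∈ contractible, star (x (exchange w).1.1 (exchange w).1.2) * y w.1.1 w.1.2 := by
        rw [Finset.sum_filter, Fintype.sum_prod_type, tensForm_apply]
        refine Finset.sum_congr rfl fun w _ => ?_
        rw [tauC_apply]
        split_ifs
        · rw [star_sum, Finset.sum_mul]
        · simp
    _ = ∑ w ∈ contractible, star (x w.1.1 w.1.2) * y (exchange w).1.1 (exchange w).1.2 :=
        Finset.sum_nbij' exchange exchange exchange_mem exchange_mem exchange_exchange
          exchange_exchange fun w hw => by rw [exchange_exchange w hw]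
    _ = tensForm N m n x (tauC N m n a b y) := by
        rw [Finset.sum_filter, Fintype.sum_prod_type, tensForm_apply]
        refine Finset.sum_congr rfl fun w _ => ?_
        rw [tauC_apply]
        split_ifs
        · rw [Finset.mul_sum]
        · simp

theorem tensForm_A_left (x y : Tens N m n) :
    tensForm N m n (A N m n x) y = tensForm N m n x (A N m n y) := by
  simp only [A, LinearMap.sum_apply, map_sum, tensForm_tauC_left]

theorem tauC_tauC (a : Fin m) (b : Fin n) (x : Tens N m n) :
    tauC N m n a b (tauC N m n a b x) = (N : ℂ) • tauC N m n a b x := by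
  ext i j
  by_cases h : i a = j b <;> simp [tauC, h]

open ComplexOrder in
theorem tauC_eq_zero_of_A_eq_zero {x : Tens N m n} (h : A N m n x = 0) (a : Fin m) (b : Fin n) :
    tauC N m n a b x = 0 := by
  have hsum : ∑ a, ∑ b, tensForm N m n (tauC N m n a b x) (tauC N m n a b x) = 0 := by
    calc _ = (N : ℂ) * tensForm N m n x (A N m n x) := by
          simp only [A, LinearMap.sum_apply, map_sum, tensForm_tauC_left, tauC_tauC, map_smul,
            smul_eq_mul, Finset.mul_sum]
      _ = 0 := by rw [h, map_zero, mul_zero]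
  have hnonneg (a : Fin m) (b : Fin n) := tensForm_self_nonneg (tauC N m n a b x)
  rw [Finset.sum_eq_zero_iff_of_nonneg fun a _ => Finset.sum_nonneg fun b _ => hnonneg a b] at hsum
  have ha := hsum a (Finset.mem_univ a)
  rw [Finset.sum_eq_zero_iff_of_nonneg fun b _ => hnonneg a b] at ha
  exact tensForm_self_eq_zero.1 (ha b (Finset.mem_univ b))

theorem mem_traceless0_of_A_eq_zero {x : Tens N m n} (h : A N m n x = 0) :
    x ∈ traceless0 N m n := by
  have ctr_apply (a : Fin m) (b : Fin n) (i : Fin m → Fin N) (j : Fin n → Fin N) :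
      ctr N m n a b x i j = tauC N m n a b x i (Function.update j b (i a)) := by
    simp [ctr, tauC]
  simp only [traceless0, Submodule.mem_iInf, LinearMap.mem_ker]
  intro a b
  ext i j
  rw [ctr_apply, tauC_eq_zero_of_A_eq_zero h]
  rfl

theorem isCompl_ker_A_range_A (N m n : ℕ) :
    IsCompl (LinearMap.ker (A N m n)) (LinearMap.range (A N m n)) := by
  have hdisj : Disjoint (LinearMap.ker (A N m n)) (LinearMap.range (A N m n)) := by
    refine Submodule.disjoint_def.2 ?_
    rintro x hx ⟨y, rfl⟩
    rw [← tensForm_self_eq_zero, tensForm_A_left, LinearMap.mem_ker.1 hx, map_zero]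
  refine ⟨hdisj, codisjoint_iff.2 (Submodule.eq_top_of_disjoint _ _ ?_ hdisj)⟩
  rw [add_comm, LinearMap.finrank_range_add_finrank_ker]

theorem tauC_mem_range_A (a : Fin m) (b : Fin n) (x : Tens N m n) :
    tauC N m n a b x ∈ LinearMap.range (A N m n) := by
  have htop : tauC N m n a b x ∈ LinearMap.ker (A N m n) ⊔ LinearMap.range (A N m n) :=
    (isCompl_ker_A_range_A N m n).sup_eq_top ▸ Submodule.mem_top
  obtain ⟨y, hy, _, ⟨s, rfl⟩, hys⟩ := Submodule.mem_sup.1 htop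
  have hy0 : y = 0 := by
    rw [← tensForm_self_eq_zero]
    calc tensForm N m n y y = tensForm N m n y (tauC N m n a b x) -
          tensForm N m n y (A N m n s) := by rw [← map_sub, ← hys, add_sub_cancel_right]
      _ = 0 := by
        rw [← tensForm_tauC_left, ← tensForm_A_left, LinearMap.mem_ker.1 hy,
          tauC_eq_zero_of_A_eq_zero hy, map_zero, LinearMap.zero_apply, LinearMap.zero_apply,
          sub_zero]
  exact ⟨s, by rw [← hys, hy0, zero_add]⟩

end MixedTensors

section InsertedTensors

/-! ### Inserting identity tensors -/

/-- The inclusion `ℂ[𝔖_k] → ℂ[𝔖_m]` in which `𝔖_k` permutes the first `k` letters. -/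
def liftAlg {k m : ℕ} (h : k ≤ m) : SymAlg k →ₐ[ℂ] SymAlg m :=
  MonoidAlgebra.mapDomainAlgHom ℂ ℂ (Perm.viaEmbeddingHom (Fin.castLEEmb h))

section LiftAlg

variable {k m : ℕ}

theorem liftAlg_ofPerm (h : k ≤ m) (p : Perm (Fin k)) :
    liftAlg h (ofPerm p) = ofPerm (p.viaEmbedding (Fin.castLEEmb h)) := by
  rw [liftAlg, MonoidAlgebra.of_apply, MonoidAlgebra.mapDomainAlgHom_apply,
    MonoidAlgebra.mapDomain_single, Perm.viaEmbeddingHom_apply, MonoidAlgebra.of_apply]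

theorem viaEmbedding_swap {α β : Type*} [DecidableEq α] [DecidableEq β] (ι : α ↪ β) (a b : α) :
    (swap a b).viaEmbedding ι = swap (ι a) (ι b) := by
  ext x
  by_cases hx : x ∈ Set.range ι
  · obtain ⟨y, rfl⟩ := hx
    rw [Perm.viaEmbedding_apply, ι.swap_apply]
  · rw [Perm.viaEmbedding_apply_of_notMem _ _ _ hx, swap_apply_of_ne_of_ne]
    · rintro rfl
      exact hx ⟨a, rfl⟩
    · rintro rfl
      exact hx ⟨b, rfl⟩

theorem liftAlg_jm (h : k ≤ m) {i : ℕ} (hi : i < k) : liftAlg h (jm k i) = jm m i := by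
  rw [jm_of_lt hi, jm_of_lt (hi.trans_le h), map_sum]
  have hIio : Finset.Iio (⟨i, hi.trans_le h⟩ : Fin m) =
      (Finset.Iio (⟨i, hi⟩ : Fin k)).map (Fin.castLEEmb h) :=
    (Fin.map_castLEEmb_Iio ⟨i, hi⟩ h).symm
  rw [hIio, Finset.sum_map]
  refine Finset.sum_congr rfl fun j _ => ?_
  rw [liftAlg_ofPerm, viaEmbedding_swap]
  rfl

theorem liftAlg_jmProd (h : k ≤ m) (z : ℂ) {i : ℕ} (hi : i ≤ k) :
    liftAlg h (jmProd k z i) = jmProd m z i := by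
  induction i with
  | zero => exact map_one _
  | succ i ih =>
    rw [jmProd_succ, jmProd_succ, map_mul, map_add, ih (by omega), liftAlg_jm h hi,
      AlgHom.commutes]

theorem liftAlg_jmSum (h : k ≤ m) : liftAlg h (jmSum k k) = jmSum m k := by
  rw [jmSum, jmSum, map_sum]
  exact Finset.sum_congr rfl fun i hi => liftAlg_jm h (Finset.mem_range.1 hi)

theorem jm_last (m : ℕ) :
    jm (m + 1) m = ∑ a : Fin m, ofPerm (swap a.castSucc (Fin.last m)) := by
  rw [jm_of_lt m.lt_succ_self]
  change ∑ j ∈ Finset.Iio (Fin.last m), _ = _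
  rw [Fin.Iio_last_eq_map, Finset.sum_map]
  rfl

end LiftAlg

/-- Tensoring with `r` copies of the identity tensor, placed in the last `r` contravariant and the
last `r` covariant slots. The equations `k + r = m` and `l + r = n` avoid truncated subtraction;
`embE` is the case `k = m - r`, `l = n - r`. -/
def embId {N k l m n r : ℕ} (hk : k + r = m) (hl : l + r = n) :
    Tens N k l →ₗ[ℂ] Tens N m n where
  toFun t i j := (∏ s : Fin r, if i ⟨k + s, by omega⟩ = j ⟨l + s, by omega⟩ then (1 : ℂ) else 0) *
    t (i ∘ Fin.castLE (by omega)) (j ∘ Fin.castLE (by omega))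
  map_add' t s := by funext i j; exact mul_add _ _ _
  map_smul' c t := by funext i j; exact mul_left_comm _ _ _

/-- Tensoring with one copy of the identity tensor, placed in the last slots. -/
abbrev insertId (N m n : ℕ) : Tens N m n →ₗ[ℂ] Tens N (m + 1) (n + 1) := embId (r := 1) rfl rfl

/-- Contraction of the last contravariant with the last covariant slot. -/
def contractLast (N m n : ℕ) : Tens N (m + 1) (n + 1) →ₗ[ℂ] Tens N m n where
  toFun t i j := ∑ c, t (Fin.snoc (α := fun _ => Fin N) i c) (Fin.snoc (α := fun _ => Fin N) j c)
  map_add' t s := by funext i j; exact Finset.sum_add_distrib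
  map_smul' c t := by funext i j; exact (Finset.mul_sum _ _ _).symm

variable {N k l m n r : ℕ}

theorem embId_apply (hk : k + r = m) (hl : l + r = n) (t : Tens N k l) (i : Fin m → Fin N)
    (j : Fin n → Fin N) : embId hk hl t i j =
      (∏ s : Fin r, if i ⟨k + s, by omega⟩ = j ⟨l + s, by omega⟩ then (1 : ℂ) else 0) *
        t (i ∘ Fin.castLE (by omega)) (j ∘ Fin.castLE (by omega)) :=
  rfl

theorem insertId_apply (t : Tens N m n) (i : Fin (m + 1) → Fin N) (j : Fin (n + 1) → Fin N) :
    insertId N m n t i j = if i (Fin.last m) = j (Fin.last n) then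
      t (i ∘ Fin.castSucc) (j ∘ Fin.castSucc) else 0 := by
  rw [embId_apply, Fin.prod_univ_one, ite_mul, one_mul, zero_mul]
  rfl

theorem embId_zero (t : Tens N m n) : embId (r := 0) rfl rfl t = t := by
  funext i j
  exact one_mul _

theorem embId_succ (hk : k + r = m) (hl : l + r = n) (t : Tens N k l) :
    embId (r := r + 1) (by omega) (by omega) t = insertId N m n (embId hk hl t) := by
  subst hk hl
  funext i j
  rw [insertId_apply, embId_apply, embId_apply, Fin.prod_univ_castSucc, mul_ite, mul_one,
    mul_zero, ite_mul, zero_mul]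
  rfl

theorem permU_embId (hk : k + r = m) (hl : l + r = n) (p : Perm (Fin k)) (t : Tens N k l) :
    permU N m n (p.viaEmbedding (Fin.castLEEmb (by omega))) (embId hk hl t) =
      embId hk hl (permU N k l p t) := by
  subst hk hl
  funext i j
  have hfix (s : Fin r) : p.viaEmbedding (Fin.castLEEmb (Nat.le_add_right k r)) ⟨k + s, by omega⟩ =
      ⟨k + s, by omega⟩ := by
    refine Perm.viaEmbedding_apply_of_notMem _ _ _ ?_
    rintro ⟨x, hx⟩
    have hxs : (x : ℕ) = k + s := congrArg Fin.val hx
    omega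
  refine congrArg₂ (· * ·) (Finset.prod_congr rfl fun s _ => ?_)
    (congrArg₂ t (funext fun x => ?_) rfl)
  · rw [Function.comp_apply, hfix]
  · exact congrArg i (Perm.viaEmbedding_apply p (Fin.castLEEmb (Nat.le_add_right k r)) x)

theorem permD_embId (hk : k + r = m) (hl : l + r = n) (q : Perm (Fin l)) (t : Tens N k l) :
    permD N m n (q.viaEmbedding (Fin.castLEEmb (by omega))) (embId hk hl t) =
      embId hk hl (permD N k l q t) := by
  have embId_flip {k l m n : ℕ} (hk : k + r = m) (hl : l + r = n) (t : Tens N k l)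
      (i : Fin m → Fin N) (j : Fin n → Fin N) :
      embId hk hl t i j = embId hl hk (fun j i => t i j) j i := by
    simp only [embId_apply, eq_comm (a := i _)]
  funext i j
  change embId hk hl t i _ = _
  rw [embId_flip, embId_flip _ _ (permD N k l q t)]
  exact congrFun (congrFun (permU_embId hl hk q fun j i => t i j) j) i

theorem actU_liftAlg_embId (hk : k + r = m) (hl : l + r = n) (x : SymAlg k) (t : Tens N k l) :
    actU N m n (liftAlg (by omega) x) (embId hk hl t) = embId hk hl (actU N k l x t) := by
  induction x using MonoidAlgebra.induction_on with
  | of p => rw [liftAlg_ofPerm, actU_ofPerm, actU_ofPerm, permU_embId]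
  | add x x' hx hx' => simp only [map_add, LinearMap.add_apply, hx, hx']
  | smul c x hx => simp only [map_smul, LinearMap.smul_apply, hx]

theorem actD_liftAlg_embId (hk : k + r = m) (hl : l + r = n) (y : SymAlg l) (t : Tens N k l) :
    actD N m n (liftAlg (by omega) y) (embId hk hl t) = embId hk hl (actD N k l y t) := by
  induction y using MonoidAlgebra.induction_on with
  | of q => rw [liftAlg_ofPerm, actD_ofPerm, actD_ofPerm, permD_embId]
  | add y y' hy hy' => simp only [map_add, LinearMap.add_apply, hy, hy']
  | smul c y hy => simp only [map_smul, LinearMap.smul_apply, hy]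

theorem update_last (i : Fin (m + 1) → Fin N) (c : Fin N) :
    Function.update i (Fin.last m) c =
      Fin.snoc (α := fun _ => Fin N) (i ∘ Fin.castSucc) c := by
  refine funext fun x => Fin.lastCases ?_ (fun a => ?_) x
  · simp
  · simp

theorem update_castSucc_comp_castSucc (i : Fin (m + 1) → Fin N) (a : Fin m) (c : Fin N) :
    Function.update i a.castSucc c ∘ Fin.castSucc = Function.update (i ∘ Fin.castSucc) a c :=
  Function.update_comp_eq_of_injective _ (Fin.castSucc_injective m) a c

theorem update_castSucc_last (i : Fin (m + 1) → Fin N) (a : Fin m) (c : Fin N) :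
    Function.update i a.castSucc c (Fin.last m) = i (Fin.last m) :=
  Function.update_of_ne (Fin.castSucc_lt_last a).ne' c i

theorem comp_swap_castSucc (i : Fin (m + 1) → Fin N) (a : Fin m) :
    (i ∘ swap a.castSucc (Fin.last m)) ∘ Fin.castSucc =
      Function.update (i ∘ Fin.castSucc) a (i (Fin.last m)) := by
  funext x
  rcases eq_or_ne x a with rfl | hx
  · simp
  · simp [Function.update_of_ne hx, swap_apply_of_ne_of_ne
      ((Fin.castSucc_injective m).ne hx) (Fin.castSucc_lt_last x).ne]

theorem contractLast_insertId (t : Tens N m n) :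
    contractLast N m n (insertId N m n t) = (N : ℂ) • t := by
  funext i j
  simp [contractLast, insertId_apply, Function.comp_def]

theorem tauC_last_last (t : Tens N (m + 1) (n + 1)) :
    tauC N (m + 1) (n + 1) (Fin.last m) (Fin.last n) t =
      insertId N m n (contractLast N m n t) := by
  funext i j
  rw [insertId_apply, tauC_apply]
  simp only [update_last]
  rfl

theorem tauC_castSucc_castSucc_insertId (a : Fin m) (b : Fin n) (t : Tens N m n) :
    tauC N (m + 1) (n + 1) a.castSucc b.castSucc (insertId N m n t) =
      insertId N m n (tauC N m n a b t) := by
  funext i j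
  simp only [tauC_apply, insertId_apply, update_castSucc_comp_castSucc, update_castSucc_last,
    Function.comp_apply]
  split_ifs <;> simp

theorem tauC_castSucc_last_insertId (a : Fin m) (t : Tens N m n) :
    tauC N (m + 1) (n + 1) a.castSucc (Fin.last n) (insertId N m n t) =
      permU N _ _ (swap a.castSucc (Fin.last m)) (insertId N m n t) := by
  funext i j
  change _ = insertId N m n t (i ∘ _) j
  simp only [tauC_apply, insertId_apply, update_castSucc_comp_castSucc, update_castSucc_last,
    comp_swap_castSucc, Function.comp_apply, swap_apply_right, update_last, Fin.snoc_last,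
    Finset.sum_ite_eq, Finset.mem_univ, if_true]
  simp [Function.comp_def]

theorem tauC_last_castSucc_insertId (b : Fin n) (t : Tens N m n) :
    tauC N (m + 1) (n + 1) (Fin.last m) b.castSucc (insertId N m n t) =
      permD N _ _ (swap b.castSucc (Fin.last n)) (insertId N m n t) := by
  funext i j
  change _ = insertId N m n t i (j ∘ _)
  simp only [tauC_apply, insertId_apply, update_castSucc_comp_castSucc, update_castSucc_last,
    comp_swap_castSucc, Function.comp_apply, swap_apply_right, update_last, Fin.snoc_last,
    Finset.sum_ite_eq', Finset.mem_univ, if_true]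
  simp [Function.comp_def]

theorem exists_tauC_eq_permU_permD_insertId (a : Fin (m + 1)) (b : Fin (n + 1))
    (t : Tens N (m + 1) (n + 1)) :
    ∃ s, tauC N (m + 1) (n + 1) a b t = (permU N (m + 1) (n + 1) (swap a (Fin.last m)) *
      permD N (m + 1) (n + 1) (swap b (Fin.last n))) (insertId N m n s) := by
  set F := permU N (m + 1) (n + 1) (swap a (Fin.last m)) *
    permD N (m + 1) (n + 1) (swap b (Fin.last n))
  have hFF : F (F t) = t := by
    funext i j
    change t ((i ∘ _) ∘ _) ((j ∘ _) ∘ _) = _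
    simp [Function.comp_assoc, ← Perm.coe_mul]
  refine ⟨contractLast N m n (F t), ?_⟩
  have hcomm := LinearMap.congr_fun (permU_mul_permD_mul_tauC (N := N) (swap a (Fin.last m))
    (swap b (Fin.last n)) (Fin.last m) (Fin.last n)) (F t)
  rw [swap_apply_right, swap_apply_right] at hcomm
  rw [← tauC_last_last]
  calc _ = tauC N (m + 1) (n + 1) a b (F (F t)) := by rw [hFF]
    _ = _ := hcomm.symm

theorem permU_permD_insertId_mem_range_A (hN : N ≠ 0) (p : Perm (Fin (m + 1)))
    (q : Perm (Fin (n + 1))) (t : Tens N m n) :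
    (permU N (m + 1) (n + 1) p * permD N (m + 1) (n + 1) q) (insertId N m n t) ∈
      LinearMap.range (A N (m + 1) (n + 1)) := by
  have htau : tauC N (m + 1) (n + 1) (Fin.last m) (Fin.last n)
      (insertId N m n ((N : ℂ)⁻¹ • t)) = insertId N m n t := by
    rw [tauC_last_last, contractLast_insertId, smul_inv_smul₀ (Nat.cast_ne_zero.2 hN)]
  rw [← htau, ← Module.End.mul_apply, permU_mul_permD_mul_tauC]
  exact tauC_mem_range_A _ _ _

/-! ### The Casimir operator -/

/-- `ℒ_m + ℛ_n - 𝒜_{m,n}`, which up to a factor and an additive constant is the quadratic Casimir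
operator of `𝔤𝔩(N)` on `V^{m,n}`. -/
def casimir (N m n : ℕ) : Module.End ℂ (Tens N m n) :=
  actU N m n (jmSum m m) + actD N m n (jmSum n n) - A N m n

theorem casimir_apply (t : Tens N m n) : casimir N m n t =
    actU N m n (jmSum m m) t + actD N m n (jmSum n n) t - A N m n t :=
  rfl

theorem casimir_insertId (t : Tens N m n) : casimir N (m + 1) (n + 1) (insertId N m n t) =
    insertId N m n (casimir N m n t) - (N : ℂ) • insertId N m n t := by
  have hU : actU N (m + 1) (n + 1) (jmSum (m + 1) m) (insertId N m n t) =
      insertId N m n (actU N m n (jmSum m m) t) := by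
    rw [← actU_liftAlg_embId, liftAlg_jmSum]
  have hD : actD N (m + 1) (n + 1) (jmSum (n + 1) n) (insertId N m n t) =
      insertId N m n (actD N m n (jmSum n n) t) := by
    rw [← actD_liftAlg_embId, liftAlg_jmSum]
  simp only [casimir_apply, jmSum_succ, map_add, map_sub, LinearMap.add_apply, hU, hD, jm_last,
    A, map_sum, LinearMap.sum_apply, actU_ofPerm, actD_ofPerm, Fin.sum_univ_castSucc,
    tauC_castSucc_castSucc_insertId, tauC_last_castSucc_insertId, tauC_castSucc_last_insertId,
    tauC_last_last, contractLast_insertId, map_smul, Finset.sum_add_distrib]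
  abel

theorem casimir_embId (hk : k + r = m) (hl : l + r = n) (t : Tens N k l) :
    casimir N m n (embId hk hl t) =
      embId hk hl (casimir N k l t) - ((r : ℂ) * N) • embId hk hl t := by
  subst hk hl
  induction r with
  | zero => simp [embId_zero]
  | succ r ih =>
    change casimir N (k + r + 1) (l + r + 1) _ = _
    rw [embId_succ rfl rfl, embId_succ rfl rfl, casimir_insertId, ih, map_sub, map_smul]
    push_cast
    module

theorem commute_actU_mul_actD_casimir (x : SymAlg m) (y : SymAlg n) :
    Commute (actU N m n x * actD N m n y) (casimir N m n) := by
  refine (Commute.add_right ?_ ?_).sub_right (commute_actU_mul_actD_A x y)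
  · exact ((commute_jmSum x).map (actU N m n)).mul_left (commute_actU_actD _ y).symm
  · exact (commute_actU_actD x _).mul_left ((commute_jmSum y).map (actD N m n))

/-! ### Generation by traceless Young-symmetrised tensors -/

theorem actU_mul_actD_mul_actU_mul_actD (x x' : SymAlg m) (y y' : SymAlg n) :
    actU N m n x * actD N m n y * (actU N m n x' * actD N m n y') =
      actU N m n (x * x') * actD N m n (y * y') := by
  rw [map_mul, map_mul, (commute_actU_actD x' y).symm.mul_mul_mul_comm]

theorem eq_top_of_ker_A_le_of_tauC_mem {S : Submodule ℂ (Tens N m n)}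
    (hker : LinearMap.ker (A N m n) ≤ S) (htau : ∀ a b t, tauC N m n a b t ∈ S) : S = ⊤ := by
  rw [eq_top_iff, ← (isCompl_ker_A_range_A N m n).sup_eq_top]
  refine sup_le hker ?_
  rintro _ ⟨t, rfl⟩
  simp only [A, LinearMap.sum_apply]
  exact Submodule.sum_mem _ fun a _ => Submodule.sum_mem _ fun b _ => htau a b t

theorem eq_top_of_embId_mem {S : Submodule ℂ (Tens N m n)}
    (hS : ∀ x y, ∀ s ∈ S, (actU N m n x * actD N m n y) s ∈ S)
    (h : ∀ k l r (hk : k + r = m) (hl : l + r = n) (t : Tens N k l), A N k l t = 0 →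
      embId hk hl t ∈ S) : S = ⊤ := by
  induction m generalizing n with
  | zero =>
    exact eq_top_of_ker_A_le_of_tauC_mem
      (fun t ht => embId_zero t ▸ h 0 n 0 rfl rfl t ht) fun a => a.elim0
  | succ m ih =>
    refine eq_top_of_ker_A_le_of_tauC_mem
      (fun t ht => embId_zero t ▸ h (m + 1) n 0 rfl rfl t ht) fun a b t => ?_
    cases n with
    | zero => exact b.elim0
    | succ n =>
      have hcomap : S.comap (insertId N m n) = ⊤ := by
        refine ih (fun x y s hs => ?_) fun k l r hk hl t ht => ?_
        · rw [Submodule.mem_comap, Module.End.mul_apply, ← actU_liftAlg_embId,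
            ← actD_liftAlg_embId]
          exact hS _ _ _ hs
        · rw [Submodule.mem_comap, ← embId_succ]
          exact h k l (r + 1) (by omega) (by omega) t ht
      obtain ⟨s, hs⟩ := exists_tauC_eq_permU_permD_insertId a b t
      have hsmem : s ∈ S.comap (insertId N m n) := hcomap ▸ Submodule.mem_top
      rw [hs, ← actU_ofPerm, ← actD_ofPerm]
      exact hS _ _ _ hsmem

theorem mem_of_forall_centralYoung {M : Type*} [AddCommGroup M] [Module ℂ M]
    (R : SymAlg m →ₐ[ℂ] Module.End ℂ M) {S : Submodule ℂ M} {w : M}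
    (h : ∀ p : m.Partition, R (centralYoung p) w ∈ S) : w ∈ S := by
  have hspan : Submodule.span ℂ (Set.range (centralYoung (m := m))) ≤
      S.comap (LinearMap.applyₗ w ∘ₗ R.toLinearMap) := by
    rw [Submodule.span_le]
    rintro _ ⟨p, rfl⟩
    exact h p
  have := hspan (one_mem_span_centralYoung m)
  rwa [Submodule.mem_comap, LinearMap.comp_apply, AlgHom.toLinearMap_apply, map_one] at this

theorem actU_mul_actD_centralYoung (μ : m.Partition) (ν : n.Partition) :
    actU N m n (centralYoung μ) * actD N m n (centralYoung ν) =
      ∑ g, ∑ h, actU N m n (ofPerm g) * actD N m n (ofPerm h) *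
        (actU N m n (youngSym (partFilling μ)) * actD N m n (youngSym (partFilling ν))) *
          (actU N m n (ofPerm g⁻¹) * actD N m n (ofPerm h⁻¹)) := by
  simp only [centralYoung, map_sum, Finset.sum_mul_sum, actU_mul_actD_mul_actU_mul_actD]

theorem eq_top_of_embId_youngSym_mem {S : Submodule ℂ (Tens N m n)}
    (hS : ∀ x y, ∀ s ∈ S, (actU N m n x * actD N m n y) s ∈ S)
    (h : ∀ k l r (hk : k + r = m) (hl : l + r = n) (μ : k.Partition) (ν : l.Partition)
      (t : Tens N k l), A N k l t = 0 →
      embId hk hl ((actU N k l (youngSym (partFilling μ)) *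
        actD N k l (youngSym (partFilling ν))) t) ∈ S) :
    S = ⊤ := by
  refine eq_top_of_embId_mem hS fun k l r hk hl t ht => ?_
  rw [← Submodule.mem_comap]
  refine mem_of_forall_centralYoung (actD N k l) fun ν =>
    mem_of_forall_centralYoung (actU N k l) fun μ => ?_
  rw [← Module.End.mul_apply, actU_mul_actD_centralYoung, Submodule.mem_comap]
  simp only [LinearMap.sum_apply, map_sum]
  refine Submodule.sum_mem _ fun g _ => Submodule.sum_mem _ fun g' _ => ?_
  rw [mul_assoc, Module.End.mul_apply, Module.End.mul_apply (actU N k l _),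
    ← actU_liftAlg_embId, ← actD_liftAlg_embId]
  refine hS _ _ _ (h k l r hk hl μ ν _ ?_)
  rw [← Module.End.mul_apply, ← (commute_actU_mul_actD_A _ _).eq, Module.End.mul_apply, ht,
    map_zero]

end InsertedTensors

section RowBounds

/-! ### Bounds on the number of rows -/

/-- The letters which the filling `f` places in the first column. -/
def firstColumn {m : ℕ} (f : Fin m → ℕ × ℕ) : Finset (Fin m) :=
  Finset.univ.filter fun x => (f x).2 = 0

/-- The vector `x` changes sign under the transpositions of any two letters of `C`. -/
def AlternatesOn {m : ℕ} {M : Type*} [AddCommGroup M] [Module ℂ M]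
    (R : SymAlg m →ₐ[ℂ] Module.End ℂ M) (C : Finset (Fin m)) (x : M) : Prop :=
  ∀ a ∈ C, ∀ b ∈ C, a ≠ b → R (ofPerm (swap a b)) x = -x

/-- The element `1 - ∑_{a ∈ C} (a m)` of `ℂ[𝔖_{m+1}]`, which carries vectors alternating on `C`
to vectors alternating on `C` together with the last letter. -/
def antiLast {m : ℕ} (C : Finset (Fin m)) : SymAlg (m + 1) :=
  1 - ∑ a ∈ C, ofPerm (swap a.castSucc (Fin.last m))

variable {N m n : ℕ}

theorem mem_firstColumn {f : Fin m → ℕ × ℕ} {x : Fin m} : x ∈ firstColumn f ↔ (f x).2 = 0 := by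
  simp [firstColumn]

theorem IsStandard.card_firstColumn {ρ : YoungDiagram} {f : Fin m → ℕ × ℕ}
    (h : IsStandard ρ f) : (firstColumn f).card = nrows ρ := by
  have hinj : Set.InjOn (fun x => (f x).1) (firstColumn f) := fun x hx y hy hxy =>
    h.injective (Prod.ext hxy ((mem_firstColumn.1 hx).trans (mem_firstColumn.1 hy).symm))
  rw [nrows, ← Finset.card_image_of_injOn hinj]
  congr 1
  ext i
  simp only [Finset.mem_image, mem_firstColumn]
  constructor
  · rintro ⟨x, -, rfl⟩
    exact ⟨f x, h.mem x, rfl⟩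
  · rintro ⟨c, hc, rfl⟩
    obtain ⟨x, hx⟩ := h.exists_apply_eq (ρ.up_left_mem le_rfl c.2.zero_le hc)
    exact ⟨x, by rw [hx], by rw [hx]⟩

section Alternating

variable {M : Type*} [AddCommGroup M] [Module ℂ M]

theorem alternatesOn_colAnti (R : SymAlg m →ₐ[ℂ] Module.End ℂ M) (f : Fin m → ℕ × ℕ) (x : M) :
    AlternatesOn R (firstColumn f) (R (colAnti f m) x) := by
  intro a ha b hb hab
  have hcol : (f a).2 = (f b).2 := (mem_firstColumn.1 ha).trans (mem_firstColumn.1 hb).symm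
  rw [← Module.End.mul_apply, ← map_mul, swap_mul_colAnti hcol hab a.2 b.2, map_neg,
    LinearMap.neg_apply]

theorem AlternatesOn.map {R : SymAlg m →ₐ[ℂ] Module.End ℂ M} {C : Finset (Fin m)} {x : M}
    (h : AlternatesOn R C x) {F : Module.End ℂ M} (hF : ∀ y, Commute (R y) F) :
    AlternatesOn R C (F x) := by
  intro a ha b hb hab
  rw [← Module.End.mul_apply, (hF _).eq, Module.End.mul_apply, h a ha b hb hab, map_neg]

variable {R : SymAlg (m + 1) →ₐ[ℂ] Module.End ℂ M} {C : Finset (Fin m)} {x : M}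

theorem antiLast_apply (R : SymAlg (m + 1) →ₐ[ℂ] Module.End ℂ M) (C : Finset (Fin m)) (x : M) :
    R (antiLast C) x = x - ∑ a ∈ C, R (ofPerm (swap a.castSucc (Fin.last m))) x := by
  rw [antiLast, map_sub, map_one, map_sum, LinearMap.sub_apply, Module.End.one_apply,
    LinearMap.sum_apply]

theorem swap_last_antiLast (h : AlternatesOn R (C.map Fin.castSuccEmb) x) {a : Fin m}
    (ha : a ∈ C) :
    R (ofPerm (swap a.castSucc (Fin.last m))) (R (antiLast C) x) = -R (antiLast C) x := by
  have hself : R (ofPerm (swap a.castSucc (Fin.last m)))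
      (R (ofPerm (swap a.castSucc (Fin.last m))) x) = x := by
    rw [← Module.End.mul_apply, ← map_mul, ← map_mul, swap_mul_self, map_one, map_one,
      Module.End.one_apply]
  have hne : ∀ b ∈ C.erase a, R (ofPerm (swap a.castSucc (Fin.last m)))
      (R (ofPerm (swap b.castSucc (Fin.last m))) x) =
        -R (ofPerm (swap b.castSucc (Fin.last m))) x := by
    intro b hb
    obtain ⟨hba, hbC⟩ := Finset.mem_erase.1 hb
    have hab : a.castSucc ≠ b.castSucc := (Fin.castSucc_injective m).ne hba.symm
    have hswap : swap a.castSucc (Fin.last m) * swap b.castSucc (Fin.last m) =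
        swap b.castSucc (Fin.last m) * swap a.castSucc b.castSucc := by
      rw [mul_swap_eq_swap_mul (swap b.castSucc (Fin.last m)),
        swap_apply_of_ne_of_ne hab (Fin.castSucc_lt_last a).ne, swap_apply_left]
    have hneg : R (ofPerm (swap a.castSucc b.castSucc)) x = -x :=
      h _ (Finset.mem_map_of_mem _ ha) _ (Finset.mem_map_of_mem _ hbC) hab
    rw [← Module.End.mul_apply, ← map_mul, ← map_mul, hswap, map_mul, map_mul,
      Module.End.mul_apply, hneg, map_neg]
  rw [antiLast_apply, map_sub, map_sum, ← Finset.add_sum_erase C _ ha,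
    ← Finset.add_sum_erase C (fun b => R (ofPerm (swap b.castSucc (Fin.last m))) x) ha, hself,
    Finset.sum_congr rfl hne, Finset.sum_neg_distrib]
  abel

theorem antiLast_antiLast (h : AlternatesOn R (C.map Fin.castSuccEmb) x) :
    R (antiLast C) (R (antiLast C) x) = ((C.card : ℂ) + 1) • R (antiLast C) x := by
  rw [antiLast_apply R C (R (antiLast C) x),
    Finset.sum_congr rfl fun a ha => swap_last_antiLast h ha, Finset.sum_const,
    ← Nat.cast_smul_eq_nsmul ℂ]
  module

end Alternating

theorem AlternatesOn.card_le_of_actU {C : Finset (Fin m)} {v : Tens N m n}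
    (h : AlternatesOn (actU N m n) C v) (hv : v ≠ 0) : C.card ≤ N := by
  by_contra! hcard
  refine hv (funext fun i => funext fun j => ?_)
  obtain ⟨a, ha, b, hb, hab, hi⟩ := Finset.exists_ne_map_eq_of_card_lt_of_maps_to
    (s := C) (t := Finset.univ) (f := i) (by simpa using hcard)
    fun _ _ => Finset.mem_coe.2 (Finset.mem_univ _)
  have hneg : v (i ∘ swap a b) j = -v i j := by
    have := h a ha b hb hab
    rw [actU_ofPerm] at this
    exact congrFun (congrFun this i) j
  have hcomp : i ∘ swap a b = i := by
    rw [comp_swap_eq_update, hi, Function.update_eq_self, ← hi, Function.update_eq_self]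
  rw [hcomp] at hneg
  exact self_eq_neg.1 hneg

theorem AlternatesOn.card_le_of_actD {C : Finset (Fin n)} {v : Tens N m n}
    (h : AlternatesOn (actD N m n) C v) (hv : v ≠ 0) : C.card ≤ N := by
  have hflip : AlternatesOn (actU N n m) C fun j i => v i j := by
    intro a ha b hb hab
    have := h a ha b hb hab
    rw [actD_ofPerm] at this
    rw [actU_ofPerm]
    exact funext fun j => funext fun i => congrFun (congrFun this i) j
  exact hflip.card_le_of_actU fun h0 => hv <| funext fun i => funext fun j =>
    congrFun (congrFun h0 j) i

theorem IsStandard.nrows_le_of_actU {ρ : YoungDiagram} {f : Fin m → ℕ × ℕ} (h : IsStandard ρ f)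
    {t : Tens N m n} (ht : actU N m n (youngSym f) t ≠ 0) : nrows ρ ≤ N := by
  rw [← h.card_firstColumn]
  refine (alternatesOn_colAnti (actU N m n) f t).card_le_of_actU fun h0 => ht ?_
  rw [youngSym, map_mul, Module.End.mul_apply, h0, map_zero]

theorem IsStandard.nrows_le_of_actD {σ : YoungDiagram} {f : Fin n → ℕ × ℕ} (h : IsStandard σ f)
    {t : Tens N m n} (ht : actD N m n (youngSym f) t ≠ 0) : nrows σ ≤ N := by
  rw [← h.card_firstColumn]
  refine (alternatesOn_colAnti (actD N m n) f t).card_le_of_actD fun h0 => ht ?_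
  rw [youngSym, map_mul, Module.End.mul_apply, h0, map_zero]

theorem tensForm_permU_left (p : Perm (Fin m)) (x y : Tens N m n) :
    tensForm N m n (permU N m n p x) y = tensForm N m n x (permU N m n p⁻¹ y) := by
  refine Fintype.sum_equiv ((Equiv.arrowCongr p.symm (Equiv.refl _)).prodCongr (Equiv.refl _))
    _ _ fun w => ?_
  change star (x (w.1 ∘ p) w.2) * y w.1 w.2 = star (x (w.1 ∘ p) w.2) * y ((w.1 ∘ p) ∘ ⇑p⁻¹) w.2
  rw [Function.comp_assoc, ← Perm.coe_mul, mul_inv_cancel, Perm.coe_one, Function.comp_id]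

theorem tensForm_permD_left (q : Perm (Fin n)) (x y : Tens N m n) :
    tensForm N m n (permD N m n q x) y = tensForm N m n x (permD N m n q⁻¹ y) := by
  refine Fintype.sum_equiv ((Equiv.refl _).prodCongr (Equiv.arrowCongr q.symm (Equiv.refl _)))
    _ _ fun w => ?_
  change star (x w.1 (w.2 ∘ q)) * y w.1 w.2 = star (x w.1 (w.2 ∘ q)) * y w.1 ((w.2 ∘ q) ∘ ⇑q⁻¹)
  rw [Function.comp_assoc, ← Perm.coe_mul, mul_inv_cancel, Perm.coe_one, Function.comp_id]

theorem tensForm_actU_antiLast_left (C : Finset (Fin m)) (x y : Tens N (m + 1) n) :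
    tensForm N (m + 1) n (actU N (m + 1) n (antiLast C) x) y =
      tensForm N (m + 1) n x (actU N (m + 1) n (antiLast C) y) := by
  simp only [antiLast_apply, actU_ofPerm, map_sub, map_sum, LinearMap.sub_apply,
    LinearMap.sum_apply, tensForm_permU_left, swap_inv]

theorem tensForm_actD_antiLast_left (C : Finset (Fin n)) (x y : Tens N m (n + 1)) :
    tensForm N m (n + 1) (actD N m (n + 1) (antiLast C) x) y =
      tensForm N m (n + 1) x (actD N m (n + 1) (antiLast C) y) := by
  simp only [antiLast_apply, actD_ofPerm, map_sub, map_sum, LinearMap.sub_apply,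
    LinearMap.sum_apply, tensForm_permD_left, swap_inv]

theorem sum_eq_sum_snoc (F : (Fin (m + 1) → Fin N) → ℂ) :
    ∑ i, F i = ∑ i, ∑ c, F (Fin.snoc (α := fun _ => Fin N) i c) := by
  rw [← (Fin.snocEquiv fun _ => Fin N).sum_comp, Fintype.sum_prod_type, Finset.sum_comm]
  rfl

theorem tensForm_insertId_left (x : Tens N m n) (y : Tens N (m + 1) (n + 1)) :
    tensForm N (m + 1) (n + 1) (insertId N m n x) y =
      tensForm N m n x (contractLast N m n y) := by
  have contractLast_apply (i : Fin m → Fin N) (j : Fin n → Fin N) : contractLast N m n y i j =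
      ∑ c, y (Fin.snoc (α := fun _ => Fin N) i c) (Fin.snoc (α := fun _ => Fin N) j c) := rfl
  simp only [tensForm_apply, Fintype.sum_prod_type, sum_eq_sum_snoc (m := m),
    sum_eq_sum_snoc (m := n), insertId_apply, Fin.snoc_last, contractLast_apply, Finset.mul_sum]
  refine Finset.sum_congr rfl fun i _ => ?_
  rw [Finset.sum_comm]
  refine Finset.sum_congr rfl fun j _ => Finset.sum_congr rfl fun c _ => ?_
  simp [apply_ite star, Function.comp_def]

theorem contractLast_permU_insertId (a : Fin m) (t : Tens N m n) :
    contractLast N m n (permU N _ _ (swap a.castSucc (Fin.last m)) (insertId N m n t)) = t := by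
  funext i j
  change ∑ c : Fin N, insertId N m n t (_ ∘ _) _ = _
  simp only [insertId_apply, comp_swap_castSucc]
  simp [Function.comp_def]

theorem contractLast_permD_insertId (b : Fin n) (t : Tens N m n) :
    contractLast N m n (permD N _ _ (swap b.castSucc (Fin.last n)) (insertId N m n t)) = t := by
  funext i j
  change ∑ c : Fin N, insertId N m n t _ (_ ∘ _) = _
  simp only [insertId_apply, comp_swap_castSucc]
  simp [Function.comp_def]

theorem contractLast_permU_permD_insertId (a : Fin m) (b : Fin n) (t : Tens N m n) :
    contractLast N m n (permU N _ _ (swap a.castSucc (Fin.last m))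
      (permD N _ _ (swap b.castSucc (Fin.last n)) (insertId N m n t))) = tauC N m n a b t := by
  funext i j
  change ∑ c : Fin N, insertId N m n t (_ ∘ _) (_ ∘ _) = _
  simp only [insertId_apply, comp_swap_castSucc, tauC_apply]
  simp [Function.comp_def]

theorem contractLast_antiLast_insertId {t : Tens N m n} (ht : A N m n t = 0)
    (C : Finset (Fin m)) (C' : Finset (Fin n)) :
    contractLast N m n (actU N (m + 1) (n + 1) (antiLast C)
      (actD N (m + 1) (n + 1) (antiLast C') (insertId N m n t))) =
        ((N : ℂ) - C.card - C'.card) • t := by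
  simp only [antiLast_apply, actU_ofPerm, actD_ofPerm, map_sub, map_sum, contractLast_insertId,
    contractLast_permU_insertId, contractLast_permD_insertId, contractLast_permU_permD_insertId,
    tauC_eq_zero_of_A_eq_zero ht, Finset.sum_const, smul_zero,
    ← Nat.cast_smul_eq_nsmul ℂ]
  module

theorem AlternatesOn.insertId_actU {C : Finset (Fin m)} {t : Tens N m n}
    (h : AlternatesOn (actU N m n) C t) :
    AlternatesOn (actU N (m + 1) (n + 1)) (C.map Fin.castSuccEmb) (insertId N m n t) := by
  simp only [AlternatesOn, Finset.forall_mem_map]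
  intro a ha b hb hab
  have hlift : ofPerm (swap (Fin.castSuccEmb a) (Fin.castSuccEmb b)) =
      liftAlg m.le_succ (ofPerm (swap a b)) := by
    rw [liftAlg_ofPerm, viaEmbedding_swap]
    rfl
  rw [hlift, actU_liftAlg_embId, h a ha b hb (ne_of_apply_ne _ hab), map_neg]

theorem AlternatesOn.insertId_actD {C : Finset (Fin n)} {t : Tens N m n}
    (h : AlternatesOn (actD N m n) C t) :
    AlternatesOn (actD N (m + 1) (n + 1)) (C.map Fin.castSuccEmb) (insertId N m n t) := by
  simp only [AlternatesOn, Finset.forall_mem_map]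
  intro a ha b hb hab
  have hlift : ofPerm (swap (Fin.castSuccEmb a) (Fin.castSuccEmb b)) =
      liftAlg n.le_succ (ofPerm (swap a b)) := by
    rw [liftAlg_ofPerm, viaEmbedding_swap]
    rfl
  rw [hlift, actD_liftAlg_embId, h a ha b hb (ne_of_apply_ne _ hab), map_neg]

theorem tensForm_antiLast_insertId_self {C : Finset (Fin m)} {C' : Finset (Fin n)}
    {t : Tens N m n} (ht : A N m n t = 0) (hC : AlternatesOn (actU N m n) C t)
    (hC' : AlternatesOn (actD N m n) C' t) {z : Tens N (m + 1) (n + 1)}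
    (hz : z = actU N (m + 1) (n + 1) (antiLast C)
      (actD N (m + 1) (n + 1) (antiLast C') (insertId N m n t))) :
    tensForm N (m + 1) (n + 1) z z =
      (((C.card : ℂ) + 1) * ((C'.card : ℂ) + 1) * ((N : ℂ) - C.card - C'.card)) *
        tensForm N m n t t := by
  have hcomm (x y s) : actD N (m + 1) (n + 1) y (actU N (m + 1) (n + 1) x s) =
      actU N (m + 1) (n + 1) x (actD N (m + 1) (n + 1) y s) :=
    (LinearMap.congr_fun (commute_actU_actD x y).eq s).symm
  have hsq : actD N (m + 1) (n + 1) (antiLast C') (actU N (m + 1) (n + 1) (antiLast C) z) =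
      (((C.card : ℂ) + 1) * ((C'.card : ℂ) + 1)) • z := by
    have hD := antiLast_antiLast hC'.insertId_actD
    have hU := antiLast_antiLast (hC.insertId_actU.map fun x =>
      commute_actU_actD x (antiLast C'))
    rw [hz, hU, map_smul, hcomm, hD, map_smul, smul_smul]
  have hcontract := contractLast_antiLast_insertId ht C C'
  rw [← hz] at hcontract
  conv_lhs => enter [1]; rw [hz]
  rw [tensForm_actU_antiLast_left, tensForm_actD_antiLast_left, hsq, map_smul,
    tensForm_insertId_left, hcontract, map_smul, smul_eq_mul, smul_eq_mul, ← mul_assoc]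

/- Adjoining the two last slots of `insertId t` to the alternating sets gives a tensor whose squared
norm is a positive multiple of `N - |C| - |C'|`. -/
open ComplexOrder in
theorem card_add_card_le {C : Finset (Fin m)} {C' : Finset (Fin n)} {t : Tens N m n}
    (ht : A N m n t = 0) (ht0 : t ≠ 0) (hC : AlternatesOn (actU N m n) C t)
    (hC' : AlternatesOn (actD N m n) C' t) : C.card + C'.card ≤ N := by
  by_contra! hcard
  have hpos : 0 < tensForm N m n t t :=
    (tensForm_self_nonneg t).lt_of_ne' (mt tensForm_self_eq_zero.1 ht0)
  have hneg : (N : ℂ) - C.card - C'.card < 0 := by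
    rw [sub_sub, sub_neg]
    exact_mod_cast hcard
  have hcoeff : ((C.card : ℂ) + 1) * ((C'.card : ℂ) + 1) * ((N : ℂ) - C.card - C'.card) < 0 :=
    mul_neg_of_pos_of_neg (by positivity) hneg
  refine (mul_neg_of_neg_of_pos hcoeff hpos).not_ge ?_
  rw [← tensForm_antiLast_insertId_self ht hC hC' rfl]
  exact tensForm_self_nonneg _

theorem nrows_add_nrows_le {μ ν : YoungDiagram} {f : Fin m → ℕ × ℕ} {g : Fin n → ℕ × ℕ}
    (hf : IsStandard μ f) (hg : IsStandard ν g) {t : Tens N m n} (ht : A N m n t = 0)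
    (h : (actU N m n (youngSym f) * actD N m n (youngSym g)) t ≠ 0) :
    nrows μ + nrows ν ≤ N := by
  rw [← hf.card_firstColumn, ← hg.card_firstColumn]
  set s := (actU N m n (colAnti f m) * actD N m n (colAnti g n)) t with hs
  refine card_add_card_le (t := s) ?_ ?_ ?_ ?_
  · rw [hs, ← Module.End.mul_apply, ← (commute_actU_mul_actD_A _ _).eq, Module.End.mul_apply, ht,
      map_zero]
  · intro h0
    refine h ?_
    rw [youngSym, youngSym, ← actU_mul_actD_mul_actU_mul_actD, Module.End.mul_apply, ← hs, h0,
      map_zero]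
  · exact alternatesOn_colAnti _ _ _
  · rw [hs, (commute_actU_actD _ _).eq]
    exact alternatesOn_colAnti _ _ _

end RowBounds

section Eigenvectors

/-! ### Containment of diagrams -/

section Containment

variable {m k : ℕ} {M : Type*} [AddCommGroup M] [Module ℂ M] {R : SymAlg m →ₐ[ℂ] Module.End ℂ M}

theorem exists_dual_jmProd_eq_eval_mul (φ : Module.Dual ℂ M) {P : ℂ[X]} (d : ℕ) {w : M}
    (hw : ∀ z, R (jmProd m z k) w = P.eval z • w) :
    ∃ Q : ℂ[X], ∀ z, φ (R (jmProd m z (k + d)) w) = (P * Q).eval z := by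
  induction d generalizing w with
  | zero => exact ⟨C (φ w), fun z => by simp [hw]⟩
  | succ d ih =>
    have hjm (z : ℂ) : R (jmProd m z k) (R (jm m (k + d)) w) = P.eval z • R (jm m (k + d)) w := by
      rw [← Module.End.mul_apply, ← map_mul, ← (commute_jm_jmProd m (k + d) k z).eq, map_mul,
        Module.End.mul_apply, hw, map_smul]
    obtain ⟨Q, hQ⟩ := ih hw
    obtain ⟨Q', hQ'⟩ := ih hjm
    refine ⟨X * Q + Q', fun z => ?_⟩
    rw [← add_assoc, jmProd_succ, map_mul, Module.End.mul_apply, map_add, LinearMap.add_apply,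
      AlgHom.commutes, Module.algebraMap_end_apply, map_add, map_smul, map_add, map_smul, hQ, hQ']
    simp only [eval_mul, eval_add, eval_X, smul_eq_mul]
    ring

theorem le_of_jmProd_apply_eq_smul {μ ρ : YoungDiagram} (hkm : k ≤ m) {w : M} (hw : w ≠ 0)
    (hμ : ∀ z, R (jmProd m z k) w = (contentPoly μ).eval z • w)
    (hρ : ∀ z, R (jmProd m z m) w = (contentPoly ρ).eval z • w) : μ ≤ ρ := by
  obtain ⟨φ, hφ⟩ : ∃ φ : Module.Dual ℂ M, φ w ≠ 0 := by
    by_contra! h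
    exact hw ((Module.forall_dual_apply_eq_zero_iff ℂ w).1 h)
  obtain ⟨Q, hQ⟩ := exists_dual_jmProd_eq_eval_mul φ (m - k) hμ
  have heq : contentPoly ρ * C (φ w) = contentPoly μ * Q := Polynomial.funext fun z => by
    rw [← hQ, Nat.add_sub_of_le hkm, hρ, map_smul, eval_mul, eval_C, smul_eq_mul]
  refine le_of_contentPoly_dvd ?_
  exact (isUnit_C.2 hφ.isUnit).dvd_mul_right.1 ⟨Q, heq⟩

end Containment

/-! ### Eigenvectors of `𝒜` -/

variable {N k l m n r : ℕ}

/-- Young symmetrisation of a tensor in `V^{k,l}` by the standard fillings of `μ` and `ν`, followed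
by the insertion of `r` identity tensors. -/
def embYoung (N : ℕ) (hk : k + r = m) (hl : l + r = n) (μ : k.Partition) (ν : l.Partition) :
    Tens N k l →ₗ[ℂ] Tens N m n :=
  embId hk hl ∘ₗ (actU N k l (youngSym (partFilling μ)) * actD N k l (youngSym (partFilling ν)))

/-- The `ℂ[𝔖_m × 𝔖_n]`-submodule of `V^{m,n}` generated by the images of traceless tensors of
`V^{k,l}` under `embYoung`; it lies in the isotypic component labelled `(μ, ν)`. -/
def isoPiece (N : ℕ) (hk : k + r = m) (hl : l + r = n) (μ : k.Partition) (ν : l.Partition) :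
    Submodule ℂ (Tens N m n) :=
  Submodule.span ℂ {s | ∃ x y t, A N k l t = 0 ∧
    s = (actU N m n x * actD N m n y) (embYoung N hk hl μ ν t)}

/-- The vectors of `isoPiece` on which the symmetric groups of the first `k` upper and the first `l`
lower letters act through `μ` and `ν`, as detected by their Jucys–Murphy products. -/
def contentPiece (N : ℕ) (hk : k + r = m) (hl : l + r = n) (μ : k.Partition) (ν : l.Partition) :
    Submodule ℂ (Tens N m n) :=
  isoPiece N hk hl μ ν ⊓
    ⨅ z, Module.End.eigenspace (actU N m n (jmProd m z k)) ((contentPoly (partDiagram μ)).eval z) ⊓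
      Module.End.eigenspace (actD N m n (jmProd n z l)) ((contentPoly (partDiagram ν)).eval z)

theorem actU_apply_of_mul_eq_smul {x x' : SymAlg m} {c : ℂ} (h : x * x' = c • x') (y : SymAlg n)
    (t : Tens N m n) :
    actU N m n x ((actU N m n x' * actD N m n y) t) = c • (actU N m n x' * actD N m n y) t := by
  rw [← Module.End.mul_apply, ← mul_assoc, ← map_mul, h, map_smul, smul_mul_assoc,
    LinearMap.smul_apply]

theorem actD_apply_of_mul_eq_smul {y y' : SymAlg n} {c : ℂ} (h : y * y' = c • y') (x : SymAlg m)
    (t : Tens N m n) :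
    actD N m n y ((actU N m n x * actD N m n y') t) = c • (actU N m n x * actD N m n y') t := by
  rw [← Module.End.mul_apply, ← mul_assoc, ← (commute_actU_actD x y).eq, mul_assoc, ← map_mul, h,
    map_smul, mul_smul_comm, LinearMap.smul_apply]

theorem A_actU_mul_actD_apply (x : SymAlg m) (y : SymAlg n) (t : Tens N m n) :
    A N m n ((actU N m n x * actD N m n y) t) = (actU N m n x * actD N m n y) (A N m n t) :=
  (LinearMap.congr_fun (commute_actU_mul_actD_A x y).eq t).symm

section Pieces

variable {hk : k + r = m} {hl : l + r = n} {μ : k.Partition} {ν : l.Partition}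

theorem isoPiece_le {S : Submodule ℂ (Tens N m n)}
    (h : ∀ x y t, A N k l t = 0 →
      (actU N m n x * actD N m n y) (embYoung N hk hl μ ν t) ∈ S) :
    isoPiece N hk hl μ ν ≤ S := by
  rw [isoPiece, Submodule.span_le]
  rintro _ ⟨x, y, t, ht, rfl⟩
  exact h x y t ht

theorem actU_mul_actD_embYoung_mem_isoPiece (x : SymAlg m) (y : SymAlg n) {t : Tens N k l}
    (ht : A N k l t = 0) :
    (actU N m n x * actD N m n y) (embYoung N hk hl μ ν t) ∈ isoPiece N hk hl μ ν :=
  Submodule.subset_span ⟨x, y, t, ht, rfl⟩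

theorem actU_mul_actD_mem_isoPiece (x : SymAlg m) (y : SymAlg n) {s : Tens N m n}
    (hs : s ∈ isoPiece N hk hl μ ν) :
    (actU N m n x * actD N m n y) s ∈ isoPiece N hk hl μ ν := by
  refine isoPiece_le (S := (isoPiece N hk hl μ ν).comap (actU N m n x * actD N m n y))
    (fun x' y' t ht => ?_) hs
  rw [Submodule.mem_comap, ← Module.End.mul_apply, actU_mul_actD_mul_actU_mul_actD]
  exact actU_mul_actD_embYoung_mem_isoPiece _ _ ht

theorem casimir_embYoung {t : Tens N k l} (ht : A N k l t = 0) :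
    casimir N m n (embYoung N hk hl μ ν t) =
      ((content (partDiagram μ) : ℂ) + content (partDiagram ν) - r * N) •
        embYoung N hk hl μ ν t := by
  rw [embYoung, LinearMap.comp_apply, casimir_embId, casimir_apply,
    actU_apply_of_mul_eq_smul (isStandard_partFilling μ).jmSum_mul_youngSym,
    actD_apply_of_mul_eq_smul (isStandard_partFilling ν).jmSum_mul_youngSym,
    A_actU_mul_actD_apply, ht, map_zero, sub_zero, map_add, map_smul, map_smul, sub_smul, add_smul]

theorem casimir_apply_of_mem_isoPiece {s : Tens N m n} (hs : s ∈ isoPiece N hk hl μ ν) :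
    casimir N m n s =
      ((content (partDiagram μ) : ℂ) + content (partDiagram ν) - r * N) • s := by
  refine Module.End.mem_eigenspace_iff.1 (isoPiece_le (fun x y t ht => ?_) hs)
  rw [Module.End.mem_eigenspace_iff, ← Module.End.mul_apply,
    ← (commute_actU_mul_actD_casimir x y).eq, Module.End.mul_apply, casimir_embYoung ht, map_smul]

theorem A_mem_isoPiece {s : Tens N m n} (hs : s ∈ isoPiece N hk hl μ ν) :
    A N m n s ∈ isoPiece N hk hl μ ν := by
  have hU := actU_mul_actD_mem_isoPiece (jmSum m m) 1 hs
  have hD := actU_mul_actD_mem_isoPiece 1 (jmSum n n) hs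
  rw [map_one, mul_one] at hU
  rw [map_one, one_mul] at hD
  have hA : A N m n s = actU N m n (jmSum m m) s + actD N m n (jmSum n n) s - casimir N m n s := by
    rw [casimir_apply, sub_sub_cancel]
  rw [hA, casimir_apply_of_mem_isoPiece hs]
  exact sub_mem (add_mem hU hD) (Submodule.smul_mem _ _ hs)

theorem isoPiece_le_glIsoComp (hrm : r ≤ m) (hrn : r ≤ n) :
    isoPiece N hk hl μ ν ≤ glIsoComp N m n r hrm hrn (partDiagram μ) (partDiagram ν) := by
  obtain rfl : k = m - r := by omega
  obtain rfl : l = n - r := by omega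
  refine isoPiece_le fun x y t ht => Submodule.subset_span ⟨_, actU_mul_actD_mem_cent x y,
    partFilling μ, partFilling ν, (isStandard_partFilling μ).isTableau,
    (isStandard_partFilling ν).isTableau, t, mem_traceless0_of_A_eq_zero ht, ?_⟩
  rw [← actU_youngSym, ← actD_youngSym]
  rfl

theorem isoPiece_le_range_A (hN : N ≠ 0) (hr : r ≠ 0) :
    isoPiece N hk hl μ ν ≤ LinearMap.range (A N m n) := by
  refine isoPiece_le fun x y t _ => ?_
  obtain ⟨r, rfl⟩ := Nat.exists_eq_succ_of_ne_zero hr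
  obtain ⟨m, rfl⟩ : ∃ m', m = m' + 1 := ⟨k + r, by omega⟩
  obtain ⟨n, rfl⟩ : ∃ n', n = n' + 1 := ⟨l + r, by omega⟩
  rw [embYoung, LinearMap.comp_apply, embId_succ (by omega) (by omega)]
  exact actU_mul_actD_mem (S := (LinearMap.range (A N _ _)).comap (LinearMap.applyₗ _))
    (fun p q => permU_permD_insertId_mem_range_A hN p q _) x y

theorem isoPiece_le_ker_A (hr : r = 0) : isoPiece N hk hl μ ν ≤ LinearMap.ker (A N m n) := by
  obtain rfl : k = m := by omega
  obtain rfl : l = n := by omega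
  subst hr
  refine isoPiece_le fun x y t ht => ?_
  rw [LinearMap.mem_ker, A_actU_mul_actD_apply, embYoung, LinearMap.comp_apply, embId_zero,
    A_actU_mul_actD_apply, ht, map_zero, map_zero]

theorem eigenvalue_eq_zero_iff (hN : N ≠ 0) {a : ℂ} {y : Tens N m n}
    (hy : y ∈ isoPiece N hk hl μ ν) (ha : Module.End.HasEigenvector (A N m n) a y) :
    a = 0 ↔ r = 0 := by
  constructor
  · rintro rfl
    by_contra hr
    have hker : y ∈ LinearMap.ker (A N m n) := by
      rw [LinearMap.mem_ker, ha.apply_eq_smul, zero_smul]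
    exact ha.2 (Submodule.disjoint_def.1 (isCompl_ker_A_range_A N m n).disjoint y hker
      (isoPiece_le_range_A hN hr hy))
  · intro hr
    refine (smul_eq_zero_iff_left ha.2).1 ?_
    rw [← ha.apply_eq_smul, LinearMap.mem_ker.1 (isoPiece_le_ker_A hr hy)]

theorem nrows_add_nrows_le_of_mem_isoPiece {s : Tens N m n} (hs : s ∈ isoPiece N hk hl μ ν)
    (h0 : s ≠ 0) : nrows (partDiagram μ) + nrows (partDiagram ν) ≤ N := by
  contrapose! h0
  refine (Submodule.mem_bot ℂ).1 (isoPiece_le (fun x y t ht => ?_) hs)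
  have hzero : (actU N k l (youngSym (partFilling μ)) * actD N k l (youngSym (partFilling ν))) t
      = 0 := by
    by_contra h
    exact h0.not_ge
      (nrows_add_nrows_le (isStandard_partFilling μ) (isStandard_partFilling ν) ht h)
  rw [embYoung, LinearMap.comp_apply, hzero, map_zero, map_zero, Submodule.mem_bot]

theorem mem_contentPiece {s : Tens N m n} : s ∈ contentPiece N hk hl μ ν ↔
    s ∈ isoPiece N hk hl μ ν ∧
      ∀ z, actU N m n (jmProd m z k) s = (contentPoly (partDiagram μ)).eval z • s ∧
        actD N m n (jmProd n z l) s = (contentPoly (partDiagram ν)).eval z • s := by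
  simp only [contentPiece, Submodule.mem_inf, Submodule.mem_iInf, Module.End.mem_eigenspace_iff]

theorem embYoung_mem_contentPiece {t : Tens N k l} (ht : A N k l t = 0) :
    embYoung N hk hl μ ν t ∈ contentPiece N hk hl μ ν := by
  refine mem_contentPiece.2 ⟨?_, fun z => ⟨?_, ?_⟩⟩
  · simpa only [map_one, one_mul, Module.End.one_apply] using
      actU_mul_actD_embYoung_mem_isoPiece (hk := hk) (hl := hl) (μ := μ) (ν := ν) 1 1 ht
  · rw [← liftAlg_jmProd (by omega : k ≤ m) z le_rfl, embYoung, LinearMap.comp_apply,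
      actU_liftAlg_embId,
      actU_apply_of_mul_eq_smul ((isStandard_partFilling μ).jmProd_mul_youngSym z), map_smul]
  · rw [← liftAlg_jmProd (by omega : l ≤ n) z le_rfl, embYoung, LinearMap.comp_apply,
      actD_liftAlg_embId,
      actD_apply_of_mul_eq_smul ((isStandard_partFilling ν).jmProd_mul_youngSym z), map_smul]

theorem apply_mem_contentPiece {F : Module.End ℂ (Tens N m n)}
    (hF : ∀ s ∈ isoPiece N hk hl μ ν, F s ∈ isoPiece N hk hl μ ν)
    (hU : ∀ z, Commute F (actU N m n (jmProd m z k)))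
    (hD : ∀ z, Commute F (actD N m n (jmProd n z l))) {s : Tens N m n}
    (hs : s ∈ contentPiece N hk hl μ ν) : F s ∈ contentPiece N hk hl μ ν := by
  rw [mem_contentPiece] at hs ⊢
  refine ⟨hF s hs.1, fun z => ⟨?_, ?_⟩⟩
  · rw [← Module.End.mul_apply, ← (hU z).eq, Module.End.mul_apply, (hs.2 z).1, map_smul]
  · rw [← Module.End.mul_apply, ← (hD z).eq, Module.End.mul_apply, (hs.2 z).2, map_smul]

theorem A_mem_contentPiece {s : Tens N m n} (hs : s ∈ contentPiece N hk hl μ ν) :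
    A N m n s ∈ contentPiece N hk hl μ ν := by
  refine apply_mem_contentPiece (fun _ => A_mem_isoPiece) (fun z => ?_) (fun z => ?_) hs
  · simpa only [map_one, mul_one] using (commute_actU_mul_actD_A (jmProd m z k) 1).symm
  · simpa only [map_one, one_mul] using (commute_actU_mul_actD_A 1 (jmProd n z l)).symm

theorem centralYoung_mem_contentPiece (ρ : m.Partition) (σ : n.Partition) {s : Tens N m n}
    (hs : s ∈ contentPiece N hk hl μ ν) :
    (actU N m n (centralYoung ρ) * actD N m n (centralYoung σ)) s ∈
      contentPiece N hk hl μ ν :=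
  apply_mem_contentPiece (fun _ => actU_mul_actD_mem_isoPiece _ _)
    (fun _ => ((commute_centralYoung ρ _).symm.map (actU N m n)).mul_left
      (commute_actU_actD _ _).symm)
    (fun _ => (commute_actU_actD _ _).mul_left
      ((commute_centralYoung σ _).symm.map (actD N m n))) hs

theorem partDiagram_le_of_mem_contentPiece {ρ : m.Partition} {σ : n.Partition} {w y : Tens N m n}
    (hyw : y = (actU N m n (centralYoung ρ) * actD N m n (centralYoung σ)) w)
    (hy : y ∈ contentPiece N hk hl μ ν) (h0 : y ≠ 0) :
    partDiagram μ ≤ partDiagram ρ ∧ partDiagram ν ≤ partDiagram σ := by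
  have hμν := (mem_contentPiece.1 hy).2
  constructor
  · refine le_of_jmProd_apply_eq_smul (by omega) h0 (fun z => (hμν z).1) fun z => ?_
    rw [hyw, actU_apply_of_mul_eq_smul (jmProd_mul_centralYoung ρ z)]
  · refine le_of_jmProd_apply_eq_smul (by omega) h0 (fun z => (hμν z).2) fun z => ?_
    rw [hyw, actD_apply_of_mul_eq_smul (jmProd_mul_centralYoung σ z)]

theorem eigenvalue_eq {ρ : m.Partition} {σ : n.Partition} {a : ℂ} {w y : Tens N m n}
    (hyw : y = (actU N m n (centralYoung ρ) * actD N m n (centralYoung σ)) w)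
    (hy : y ∈ isoPiece N hk hl μ ν) (ha : Module.End.HasEigenvector (A N m n) a y) :
    a = (r : ℂ) * (N : ℂ) + ((content (partDiagram ρ) - content (partDiagram μ) : ℤ) : ℂ)
      + ((content (partDiagram σ) - content (partDiagram ν) : ℤ) : ℂ) := by
  have hU : actU N m n (jmSum m m) y = (content (partDiagram ρ) : ℂ) • y := by
    rw [hyw, actU_apply_of_mul_eq_smul (jmSum_mul_centralYoung ρ)]
  have hD : actD N m n (jmSum n n) y = (content (partDiagram σ) : ℂ) • y := by
    rw [hyw, actD_apply_of_mul_eq_smul (jmSum_mul_centralYoung σ)]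
  have hcas := casimir_apply_of_mem_isoPiece hy
  rw [casimir_apply, hU, hD, ha.apply_eq_smul, ← add_smul, ← sub_smul] at hcas
  have hscal := smul_left_injective ℂ ha.2 hcas
  push_cast
  linear_combination -hscal

end Pieces

theorem le_range_of_disjoint_ker {M : Type*} [AddCommGroup M] [Module ℂ M] [FiniteDimensional ℂ M]
    {B : Module.End ℂ M} {S : Submodule ℂ M} (hS : ∀ s ∈ S, B s ∈ S)
    (hker : Disjoint S (LinearMap.ker B)) : S ≤ LinearMap.range B := by
  have hinj : Function.Injective (B.restrict hS) := by
    rw [← LinearMap.ker_eq_bot, LinearMap.ker_eq_bot']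
    exact fun s hs => Subtype.ext
      (Submodule.disjoint_def.1 hker s s.2 (congrArg Subtype.val hs))
  intro s hs
  obtain ⟨u, hu⟩ := LinearMap.injective_iff_surjective.1 hinj ⟨s, hs⟩
  exact ⟨u, congrArg Subtype.val hu⟩

-- Otherwise `𝒜 - a` is injective, hence surjective, on every piece, and the pieces generate.
theorem exists_hasEigenvector_mem_contentPiece {a : ℂ}
    (ha : Module.End.HasEigenvalue (A N m n) a) :
    ∃ (k l r : ℕ) (hk : k + r = m) (hl : l + r = n) (μ : k.Partition) (ν : l.Partition),
      ∃ w ∈ contentPiece N hk hl μ ν, Module.End.HasEigenvector (A N m n) a w := by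
  by_contra! hnot
  set B : Module.End ℂ (Tens N m n) := A N m n - a • 1 with hB
  have hcomm (x y) : Commute (actU N m n x * actD N m n y) B :=
    (commute_actU_mul_actD_A x y).sub_right ((Commute.one_right _).smul_right a)
  have htop : LinearMap.range B = ⊤ := by
    refine eq_top_of_embId_youngSym_mem ?_ fun k l r hk hl μ ν t ht => ?_
    · rintro x y _ ⟨v, rfl⟩
      exact ⟨_, (LinearMap.congr_fun (hcomm x y).eq v).symm⟩
    · refine le_range_of_disjoint_ker (S := contentPiece N hk hl μ ν) (fun s hs => ?_) ?_
        (embYoung_mem_contentPiece ht)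
      · exact sub_mem (A_mem_contentPiece hs) (Submodule.smul_mem _ a hs)
      · rw [hB, ← Module.End.eigenspace_def, Submodule.disjoint_def]
        exact fun s hs hsa => by_contra fun h => hnot k l r hk hl μ ν s hs ⟨hsa, h⟩
  have hinj : LinearMap.ker B = ⊥ := LinearMap.ker_eq_bot.2
    (LinearMap.injective_iff_surjective.2 (LinearMap.range_eq_top.1 htop))
  exact ha (Module.End.eigenspace_def.trans hinj)

theorem exists_centralYoung_apply_ne_zero {w : Tens N m n} (hw : w ≠ 0) :
    ∃ (ρ : m.Partition) (σ : n.Partition),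
      (actU N m n (centralYoung ρ) * actD N m n (centralYoung σ)) w ≠ 0 := by
  by_contra! h
  refine hw ((Submodule.mem_bot ℂ).1 ?_)
  refine mem_of_forall_centralYoung (actD N m n) fun σ =>
    mem_of_forall_centralYoung (actU N m n) fun ρ => ?_
  exact (Submodule.mem_bot ℂ).2 (h ρ σ)

theorem exists_hasEigenvector_centralYoung {a : ℂ} (ha : Module.End.HasEigenvalue (A N m n) a) :
    ∃ (k l r : ℕ) (hk : k + r = m) (hl : l + r = n) (μ : k.Partition) (ν : l.Partition)
      (ρ : m.Partition) (σ : n.Partition) (w y : Tens N m n),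
      y = (actU N m n (centralYoung ρ) * actD N m n (centralYoung σ)) w ∧
        y ∈ contentPiece N hk hl μ ν ∧ Module.End.HasEigenvector (A N m n) a y := by
  obtain ⟨k, l, r, hk, hl, μ, ν, w, hw, hwa⟩ := exists_hasEigenvector_mem_contentPiece ha
  obtain ⟨ρ, σ, hy⟩ := exists_centralYoung_apply_ne_zero hwa.2
  refine ⟨k, l, r, hk, hl, μ, ν, ρ, σ, w, _, rfl, centralYoung_mem_contentPiece ρ σ hw,
    Module.End.mem_eigenspace_iff.2 ?_, hy⟩
  rw [A_actU_mul_actD_apply, hwa.apply_eq_smul, map_smul]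

theorem centralYoung_mem_glglComp (ρ : m.Partition) (σ : n.Partition) (w : Tens N m n) :
    (actU N m n (centralYoung ρ) * actD N m n (centralYoung σ)) w ∈
      glglComp N m n (partDiagram ρ) (partDiagram σ) := by
  rw [actU_mul_actD_centralYoung]
  simp only [LinearMap.sum_apply, actU_ofPerm, actD_ofPerm, actU_youngSym, actD_youngSym]
  exact Submodule.sum_mem _ fun g _ => Submodule.sum_mem _ fun h _ => Submodule.subset_span
    ⟨partFilling ρ, partFilling σ, (isStandard_partFilling ρ).isTableau,
      (isStandard_partFilling σ).isTableau, g, h, _, rfl⟩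

theorem nrows_le_of_centralYoung {ρ : m.Partition} {σ : n.Partition} {w : Tens N m n}
    (hw : (actU N m n (centralYoung ρ) * actD N m n (centralYoung σ)) w ≠ 0) :
    nrows (partDiagram ρ) ≤ N ∧ nrows (partDiagram σ) ≤ N := by
  rw [actU_mul_actD_centralYoung] at hw
  simp only [LinearMap.sum_apply] at hw
  obtain ⟨g, -, hg⟩ := Finset.exists_ne_zero_of_sum_ne_zero hw
  obtain ⟨h, -, hgh⟩ := Finset.exists_ne_zero_of_sum_ne_zero hg
  rw [mul_assoc, Module.End.mul_apply, Module.End.mul_apply] at hgh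
  have hU := ne_of_apply_ne (actU N m n (ofPerm g) * actD N m n (ofPerm h))
    (hgh.trans_eq (map_zero _).symm)
  have hD := hU
  rw [(commute_actU_actD _ _).eq] at hD
  rw [Module.End.mul_apply] at hU hD
  exact ⟨(isStandard_partFilling ρ).nrows_le_of_actU hU,
    (isStandard_partFilling σ).nrows_le_of_actD hD⟩

end Eigenvectors

end Mixed

/-- every eigenvalue a of 𝒜_{m,n} on V^{m,n} has the form
a = rN + c(ρ/μ) + c(σ/ν), where 0 ≤ r ≤ min(m,n), ρ ⊢ m and σ ⊢ n have at most N
rows, μ ⊆ ρ, ν ⊆ σ with m − |μ| = n − |ν| = r and ℓ(μ)+ℓ(ν) ≤ N, and the rational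
GL(N)-representation labelled (μ,ν) occurs in U^{(ρ,∅)} ⊗ U^{(∅,σ)} (i.e. the
corresponding isotypic components of V^{m,n} intersect nontrivially); moreover
a = 0 if and only if r = 0. -/
theorem eigenvalues_A (N m n : ℕ) (hm : 1 ≤ m) (hn : 1 ≤ n) (hN : 1 ≤ N)
    (a : ℂ) (ha : Module.End.HasEigenvalue (Mixed.A N m n) a) :
    ∃ (r : ℕ) (hrm : r ≤ m) (hrn : r ≤ n) (ρ σ μ ν : YoungDiagram),
      ρ.card = m ∧ σ.card = n ∧
      Mixed.nrows ρ ≤ N ∧ Mixed.nrows σ ≤ N ∧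
      μ.card = m - r ∧ ν.card = n - r ∧
      μ.cells ⊆ ρ.cells ∧ ν.cells ⊆ σ.cells ∧
      Mixed.nrows μ + Mixed.nrows ν ≤ N ∧
      (Mixed.glIsoComp N m n r hrm hrn μ ν ⊓ Mixed.glglComp N m n ρ σ ≠ ⊥) ∧
      a = (r : ℂ) * (N : ℂ) + ((Mixed.content ρ - Mixed.content μ : ℤ) : ℂ)
            + ((Mixed.content σ - Mixed.content ν : ℤ) : ℂ) ∧
      (a = 0 ↔ r = 0) := by
  obtain ⟨k, l, r, hk, hl, μ, ν, ρ, σ, w, y, hyw, hy, hya⟩ :=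
    Mixed.exists_hasEigenvector_centralYoung ha
  have hyiso := (Mixed.mem_contentPiece.1 hy).1
  have hyglgl := Mixed.centralYoung_mem_glglComp ρ σ w
  have hrows := Mixed.nrows_le_of_centralYoung (hyw ▸ hya.2)
  have hle := Mixed.partDiagram_le_of_mem_contentPiece hyw hy hya.2
  have hμ := Mixed.card_partDiagram μ
  have hν := Mixed.card_partDiagram ν
  have hrm : r ≤ m := by omega
  have hrn : r ≤ n := by omega
  refine ⟨r, hrm, hrn, Mixed.partDiagram ρ, Mixed.partDiagram σ, Mixed.partDiagram μ,
    Mixed.partDiagram ν, Mixed.card_partDiagram ρ, Mixed.card_partDiagram σ, hrows.1, hrows.2,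
    by omega, by omega, hle.1, hle.2, Mixed.nrows_add_nrows_le_of_mem_isoPiece hyiso hya.2,
    ?_, Mixed.eigenvalue_eq hyw hyiso hya,
    Mixed.eigenvalue_eq_zero_iff (Nat.one_le_iff_ne_zero.1 hN) hyiso hya⟩
  exact Submodule.ne_bot_iff _ |>.2
    ⟨y, ⟨Mixed.isoPiece_le_glIsoComp hrm hrn hyiso, hyw ▸ hyglgl⟩, hya.2⟩
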